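/- arXiv:1107.0817 — 2 statements merged into one kernel-verified Lean document; each statement's English description precedes it below -/
import Mathlib

section
/- Let f be an orientation-preserving homeomorphism of the plane ℝ². If there exists a smooth structure on S² = ℝ² ⊔ {∞} such that f extends to a C¹ diffeomorphism of S², then f satisfies properties (P1) and (P2). -/
open MeasureTheory Filter Topology Set Metric

noncomputable section

attribute [local instance] Classical.propDecidable

/-- An isotopy (within homeomorphisms of `X`) from the identity to `f`,
parametrised by `t ∈ [0,1]` (the values for `t ∉ [0,1]` are irrelevant). -/
structure HIsotopy {X : Type*} [TopologicalSpace X] (f : X ≃ₜ X) where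
  F : ℝ → X ≃ₜ X
  cont : Continuous fun p : ℝ × X => F p.1 p.2
  cont_symm : Continuous fun p : ℝ × X => (F p.1).symm p.2
  zero : F 0 = Homeomorph.refl X
  one : F 1 = f

/-- The set of fixed points of a map. -/
def FixPts {X : Type*} (g : X → X) : Set X := {z | g z = z}

/-- The set of positively recurrent points of `f`. -/
def RecPlus (f : ℂ ≃ₜ ℂ) : Set ℂ :=
  {z | ∃ n : ℕ → ℕ, StrictMono n ∧ Tendsto (fun k => (⇑f)^[n k] z) atTop (𝓝 z)}

/-- The total angular variation (number of turns around the origin, i.e. the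
integral of the polar-angle form `dθ`) of a continuous path `[0,1] → ℂ ∖ {0}`,
defined via a continuous lift of the argument (junk value otherwise). -/
def angVar (γ : ℝ → ℂ) : ℝ :=
  if h : ∃ θ : ℝ → ℝ, ContinuousOn θ (Set.Icc 0 1) ∧
      ∀ t ∈ Set.Icc (0 : ℝ) 1, γ t = (‖γ t‖ : ℂ) * Complex.exp ((θ t : ℂ) * Complex.I)
  then (h.choose 1 - h.choose 0) / (2 * Real.pi)
  else 0

/-- `Enlace_I(z,z')`: the integral of `dθ` along `t ↦ f_t(z) - f_t(z')`. -/
def Enlace {f : ℂ ≃ₜ ℂ} (I : HIsotopy f) (z z' : ℂ) : ℝ :=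
  angVar fun t => I.F t z - I.F t z'

/-- `Tourne_I(z)`: the integral of `dθ` along `t ↦ f_t(z)`. -/
def Tourne {f : ℂ ≃ₜ ℂ} (I : HIsotopy f) (z : ℂ) : ℝ :=
  angVar fun t => I.F t z

/-- Property (P1): `Enlace_I` is bounded on pairs of distinct fixed points. -/
def P1 {f : ℂ ≃ₜ ℂ} (I : HIsotopy f) : Prop :=
  ∃ M : ℝ, ∀ z ∈ FixPts ⇑f, ∀ z' ∈ FixPts ⇑f, z ≠ z' → |Enlace I z z'| ≤ M

/-- Property (P2): `Tourne_I` is constant on the fixed points in a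
neighbourhood of infinity (i.e. outside some compact set). -/
def P2 {f : ℂ ≃ₜ ℂ} (I : HIsotopy f) : Prop :=
  ∃ K : Set ℂ, IsCompact K ∧
    ∀ z ∈ FixPts ⇑f \ K, ∀ z' ∈ FixPts ⇑f \ K, Tourne I z = Tourne I z'

/-- An isotopy is adapted if `Tourne_I` vanishes on the fixed points in a
neighbourhood of infinity. -/
def Adapted {f : ℂ ≃ₜ ℂ} (I : HIsotopy f) : Prop :=
  ∃ K : Set ℂ, IsCompact K ∧ ∀ z ∈ FixPts ⇑f \ K, Tourne I z = 0

/-- The orbit of `z` has rotation number `ρ` around `z'` (with respect to the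
isotopy `I`): along every strictly increasing sequence of integers `(n k)` with
`f^[n k] z → z`, the Birkhoff averages of `Enlace I · z'` converge to `ρ`. -/
def HasRot {f : ℂ ≃ₜ ℂ} (I : HIsotopy f) (z' z : ℂ) (ρ : ℝ) : Prop :=
  ∀ n : ℕ → ℕ, StrictMono n → Tendsto (fun k => (⇑f)^[n k] z) atTop (𝓝 z) →
    Tendsto (fun k => (∑ r ∈ Finset.range (n k), Enlace I ((⇑f)^[r] z) z') / (n k : ℝ))
      atTop (𝓝 ρ)

/-- The rotation number `ρ_{z'}(z)` as a function (junk value `0` if it is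
not defined). -/
def rho {f : ℂ ≃ₜ ℂ} (I : HIsotopy f) (z' z : ℂ) : ℝ :=
  if h : ∃ ρ : ℝ, HasRot I z' z ρ then h.choose else 0

/-- A free disc for `f`: an open set homeomorphic to the plane and disjoint
from its image. -/
def FreeDisc (f : ℂ ≃ₜ ℂ) (U : Set ℂ) : Prop :=
  IsOpen U ∧ Nonempty (U ≃ₜ ℂ) ∧ Disjoint (⇑f '' U) U

/-- The first return time `τ_U(z)` to `U` (junk value `0` if the orbit never
returns). -/
def retTime (f : ℂ ≃ₜ ℂ) (U : Set ℂ) (z : ℂ) : ℕ :=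
  sInf {n : ℕ | 0 < n ∧ (⇑f)^[n] z ∈ U}

/-- `γ` is a path in `U` from `x` to `y` (parametrised by `[0,1]`). -/
def IsPathIn (U : Set ℂ) (x y : ℂ) (γ : ℝ → ℂ) : Prop :=
  ContinuousOn γ (Set.Icc 0 1) ∧ (∀ t ∈ Set.Icc (0 : ℝ) 1, γ t ∈ U) ∧ γ 0 = x ∧ γ 1 = y

/-- `α_{U,z'}(z) = Σ_{0 ≤ ℓ < τ_U(z)} Enlace_I(f^ℓ(z),z') + ∫_{γ_{U,z} - z'} dθ`,
where `γ_{U,z}` is a path in `U` joining the first return `F_U(z)` to `z`. -/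
def alphaU {f : ℂ ≃ₜ ℂ} (I : HIsotopy f) (U : Set ℂ) (z' z : ℂ) : ℝ :=
  (∑ ℓ ∈ Finset.range (retTime f U z), Enlace I ((⇑f)^[ℓ] z) z') +
    if h : ∃ γ : ℝ → ℂ, IsPathIn U ((⇑f)^[retTime f U z] z) z γ
    then angVar fun t => h.choose t - z' else 0

/-- `α̂_{U,R}(z) = sup { |α_{U,z'}(z)| : z' ∈ Fix(f), ‖z'‖ ≥ R }`. -/
def alphaHat {f : ℂ ≃ₜ ℂ} (I : HIsotopy f) (U : Set ℂ) (R : ℝ) (z : ℂ) : ℝ :=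
  sSup {a : ℝ | ∃ z' ∈ FixPts ⇑f, R ≤ ‖z'‖ ∧ a = |alphaU I U z' z|}

/-- The (closed) support of a measure. -/
def measSupport {X : Type*} [TopologicalSpace X] {m : MeasurableSpace X}
    (μ : Measure X) : Set X :=
  {x | ∀ U : Set X, IsOpen U → x ∈ U → μ U ≠ 0}

/-- The standard unit sphere `S² ⊂ ℝ³`. -/
notation "𝕊²" => Metric.sphere (0 : EuclideanSpace ℝ (Fin 3)) 1

instance : Fact (Module.finrank ℝ (EuclideanSpace ℝ (Fin 3)) = 3) :=
  ⟨finrank_euclideanSpace_fin⟩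

open Manifold in
/-- `g` is a `C¹` diffeomorphism of the standard sphere. -/
def IsC1SphereDiffeo (g : 𝕊² → 𝕊²) : Prop :=
  Function.Bijective g ∧ ContMDiff (𝓡 2) (𝓡 2) 1 g ∧
    ∃ g' : 𝕊² → 𝕊², Function.LeftInverse g' g ∧ Function.RightInverse g' g ∧
      ContMDiff (𝓡 2) (𝓡 2) 1 g'

/-- `f` extends to a `C¹` diffeomorphism of `S² = ℝ² ⊔ {∞}` for some smooth
structure on `S²`: transporting the extension of `f` to the one-point
compactification through some homeomorphism with the standard sphere yields a
`C¹` diffeomorphism. -/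
def ExtendsToC1SphereDiffeo (f : ℂ ≃ₜ ℂ) : Prop :=
  ∃ φ : OnePoint ℂ ≃ₜ 𝕊², IsC1SphereDiffeo fun x => φ (OnePoint.map (⇑f) (φ.symm x))

/-- The commutator loop `t ↦ [f₁^t, f₂^t] = f₁^t ∘ f₂^t ∘ (f₁^t)⁻¹ ∘ (f₂^t)⁻¹`. -/
def commLoop {X : Type*} [TopologicalSpace X] {f₁ f₂ : X ≃ₜ X}
    (I₁ : HIsotopy f₁) (I₂ : HIsotopy f₂) (t : ℝ) : X ≃ₜ X :=
  (I₂.F t).symm.trans ((I₁.F t).symm.trans ((I₂.F t).trans (I₁.F t)))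

/-- The invariant `W(f₁,f₂)` vanishes: for isotopies from the identity to
`f₁`, `f₂`, the commutator loop is null-homotopic (rel basepoint) in the group
of homeomorphisms. -/
def WVanishes {X : Type*} [TopologicalSpace X] (f₁ f₂ : X ≃ₜ X) : Prop :=
  ∃ (I₁ : HIsotopy f₁) (I₂ : HIsotopy f₂) (H : ℝ → ℝ → X ≃ₜ X),
    Continuous (fun p : (ℝ × ℝ) × X => H p.1.1 p.1.2 p.2) ∧
    Continuous (fun p : (ℝ × ℝ) × X => (H p.1.1 p.1.2).symm p.2) ∧
    (∀ t, H 0 t = commLoop I₁ I₂ t) ∧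
    (∀ t, H 1 t = Homeomorph.refl X) ∧
    (∀ s, H s 0 = Homeomorph.refl X) ∧
    (∀ s, H s 1 = Homeomorph.refl X)

/-- The shorter great-circle arc joining `p` to `z` on the unit sphere
(for `z` neither `p` nor its antipode): the points of the sphere which are
nonnegative linear combinations of `p` and `z`. -/
def minorArcS (p z : 𝕊²) : Set 𝕊² :=
  {x | ∃ a b : ℝ, 0 ≤ a ∧ 0 ≤ b ∧
    (x : EuclideanSpace ℝ (Fin 3)) =
      a • (p : EuclideanSpace ℝ (Fin 3)) + b • (z : EuclideanSpace ℝ (Fin 3))}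

/-- The longer great-circle arc joining `p` to `z` on the unit sphere. -/
def majorArcS (p z : 𝕊²) : Set 𝕊² :=
  {x | ∃ a b : ℝ, (a ≤ 0 ∨ b ≤ 0) ∧
    (x : EuclideanSpace ℝ (Fin 3)) =
      a • (p : EuclideanSpace ℝ (Fin 3)) + b • (z : EuclideanSpace ℝ (Fin 3))}


/-- A nonvanishing path, continuous on the unit interval. -/
def NZPath (γ : ℝ → ℂ) : Prop :=
  ContinuousOn γ (Icc 0 1) ∧ ∀ t ∈ Icc (0 : ℝ) 1, γ t ≠ 0

lemma NZPath.exists_log {γ : ℝ → ℂ} (h : NZPath γ) :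
    ∃ L : ℝ → ℂ, ContinuousOn L (Icc 0 1) ∧ ∀ t ∈ Icc (0 : ℝ) 1, γ t = Complex.exp (L t) := by
  let g : C(unitInterval, {z : ℂ // z ≠ 0}) :=
    ⟨fun t => ⟨γ t, h.2 t t.2⟩, by
      refine Continuous.subtype_mk ?_ _
      exact continuousOn_iff_continuous_domRestrict.1 h.1⟩
  obtain ⟨e, he⟩ : ∃ e : ℂ, Complex.exp e = γ 0 :=
    ⟨Complex.log (γ 0), Complex.exp_log (h.2 0 (by simp))⟩
  obtain ⟨Γ, hΓ, -⟩ := Complex.isCoveringMap_exp.exists_path_lifts g e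
    (by apply Subtype.ext; simp [g, he])
  refine ⟨fun t => Γ (projIcc 0 1 zero_le_one t), ?_, ?_⟩
  · exact (Γ.continuous.comp continuous_projIcc).continuousOn
  · intro t ht
    have := congrArg Subtype.val (congrFun hΓ ⟨t, ht⟩)
    simp only [Function.comp, g, ContinuousMap.coe_mk] at this
    simp only [projIcc_of_mem zero_le_one ht]
    exact this.symm

lemma angle_lift_unique {θ η : ℝ → ℝ} (hθ : ContinuousOn θ (Icc 0 1))
    (hη : ContinuousOn η (Icc 0 1))
    (h : ∀ t ∈ Icc (0 : ℝ) 1, Complex.exp ((θ t : ℂ) * Complex.I) =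
      Complex.exp ((η t : ℂ) * Complex.I)) :
    θ 1 - θ 0 = η 1 - η 0 := by
  have key : ∀ t ∈ Icc (0 : ℝ) 1, ∃ n : ℤ, (θ t - η t) / (2 * Real.pi) = n := by
    intro t ht
    obtain ⟨n, hn⟩ := Complex.exp_eq_exp_iff_exists_int.1 (h t ht)
    refine ⟨n, ?_⟩
    have h2 := congrArg Complex.im hn
    simp at h2
    have := Real.pi_pos
    field_simp
    linarith
  have hc : ContinuousOn (fun t => (θ t - η t) / (2 * Real.pi)) (Icc 0 1) :=
    (hθ.sub hη).div_const _
  have := (isPreconnected_Icc (a := (0 : ℝ)) (b := 1)).constant_of_mapsTo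
    (T := range ((↑) : ℤ → ℝ)) (f := fun t => (θ t - η t) / (2 * Real.pi))
    Int.isClosedEmbedding_coe_real.isInducing.isDiscrete_range hc
    (fun t ht => by obtain ⟨n, hn⟩ := key t ht; exact ⟨n, hn.symm⟩)
    (x := 0) (y := 1) (by simp) (by simp)
  have hp := Real.pi_pos
  field_simp at this
  linarith

lemma angVar_of_log {γ L : ℝ → ℂ} (hL : ContinuousOn L (Icc 0 1))
    (h : ∀ t ∈ Icc (0 : ℝ) 1, γ t = Complex.exp (L t)) :
    angVar γ = ((L 1).im - (L 0).im) / (2 * Real.pi) := by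
  have key : ∀ t ∈ Icc (0 : ℝ) 1,
      γ t = (‖γ t‖ : ℂ) * Complex.exp (((L t).im : ℂ) * Complex.I) := by
    intro t ht
    rw [h t ht, Complex.norm_exp, Complex.ofReal_exp, ← Complex.exp_add, Complex.re_add_im]
  have hex : ∃ θ : ℝ → ℝ, ContinuousOn θ (Set.Icc 0 1) ∧
      ∀ t ∈ Set.Icc (0 : ℝ) 1, γ t = (‖γ t‖ : ℂ) * Complex.exp ((θ t : ℂ) * Complex.I) :=
    ⟨fun t => (L t).im, Complex.continuous_im.comp_continuousOn hL, key⟩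
  unfold angVar
  rw [dif_pos hex]
  congr 1
  refine angle_lift_unique (η := fun t => (L t).im) hex.choose_spec.1
    (Complex.continuous_im.comp_continuousOn hL) ?_
  intro t ht
  have h1 := hex.choose_spec.2 t ht
  have h2 := key t ht
  have h0 : (‖γ t‖ : ℂ) ≠ 0 := by
    rw [h t ht]; simp
  rw [h2, norm_mul, Complex.norm_exp_ofReal_mul_I, mul_one, Complex.norm_real, norm_norm] at h1
  exact (mul_left_cancel₀ h0 h1).symm

lemma NZPath.mul {γ δ : ℝ → ℂ} (h : NZPath γ) (h' : NZPath δ) : NZPath (fun t => γ t * δ t) :=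
  ⟨h.1.mul h'.1, fun t ht => mul_ne_zero (h.2 t ht) (h'.2 t ht)⟩

lemma NZPath.inv {γ : ℝ → ℂ} (h : NZPath γ) : NZPath (fun t => (γ t)⁻¹) :=
  ⟨h.1.inv₀ h.2, fun t ht => inv_ne_zero (h.2 t ht)⟩

lemma angVar_mul {γ δ : ℝ → ℂ} (h : NZPath γ) (h' : NZPath δ) :
    angVar (fun t => γ t * δ t) = angVar γ + angVar δ := by
  obtain ⟨L, hL, e⟩ := h.exists_log
  obtain ⟨L', hL', e'⟩ := h'.exists_log
  rw [angVar_of_log hL e, angVar_of_log hL' e', angVar_of_log (L := fun t => L t + L' t)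
    (hL.add hL') (fun t ht => by rw [e t ht, e' t ht, Complex.exp_add])]
  simp only [Complex.add_im]
  ring

lemma angVar_congr {γ δ : ℝ → ℂ} (h : NZPath γ) (e : ∀ t ∈ Icc (0 : ℝ) 1, δ t = γ t) :
    angVar δ = angVar γ := by
  obtain ⟨L, hL, e'⟩ := h.exists_log
  rw [angVar_of_log hL e', angVar_of_log hL (fun t ht => by rw [e t ht, e' t ht])]

lemma angVar_const (c : ℂ) (hc : c ≠ 0) : angVar (fun _ => c) = 0 := by
  rw [angVar_of_log (L := fun _ => Complex.log c) continuousOn_const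
    (fun t _ => (Complex.exp_log hc).symm)]
  simp

lemma angVar_rev {γ : ℝ → ℂ} (h : NZPath γ) : angVar (fun t => γ (1 - t)) = - angVar γ := by
  obtain ⟨L, hL, e⟩ := h.exists_log
  rw [angVar_of_log hL e, angVar_of_log (L := fun t => L (1 - t))
    (hL.comp (by fun_prop) (fun t ht => ⟨by linarith [ht.2], by linarith [ht.1]⟩))
    (fun t ht => e _ ⟨by linarith [ht.2], by linarith [ht.1]⟩)]
  simp only [sub_self, sub_zero]
  ring

lemma angVar_neg {γ : ℝ → ℂ} (h : NZPath γ) : angVar (fun t => - γ t) = angVar γ := by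
  have := angVar_mul (γ := fun _ => -1) (δ := γ) ⟨continuousOn_const, by simp⟩ h
  rw [angVar_const _ (by simp)] at this
  simpa using this

/-- A loop in the slit plane does not wind. -/
lemma angVar_slit_loop {γ : ℝ → ℂ} (h : ContinuousOn γ (Icc 0 1))
    (hs : ∀ t ∈ Icc (0 : ℝ) 1, γ t ∈ Complex.slitPlane) (hl : γ 0 = γ 1) : angVar γ = 0 := by
  rw [angVar_of_log (L := fun t => Complex.log (γ t)) (h.clog hs)
    (fun t ht => (Complex.exp_log (Complex.slitPlane_ne_zero (hs t ht))).symm), hl]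
  simp

/-- Two loops whose quotient stays in the slit plane have the same winding. -/
lemma angVar_eq_of_div_slit {γ δ : ℝ → ℂ} (h : NZPath γ) (h' : NZPath δ)
    (hs : ∀ t ∈ Icc (0 : ℝ) 1, γ t / δ t ∈ Complex.slitPlane)
    (hl : γ 0 / δ 0 = γ 1 / δ 1) : angVar γ = angVar δ := by
  have hq : NZPath (fun t => γ t / δ t) := by
    simpa only [div_eq_mul_inv] using h.mul h'.inv
  have h1 : angVar (fun t => γ t / δ t) = 0 := angVar_slit_loop hq.1 hs hl
  have h2 := angVar_mul hq h'
  rw [h1, zero_add] at h2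
  rw [← h2]
  exact angVar_congr (hq.mul h') fun t ht => by
    rw [div_mul_cancel₀ _ (h'.2 t ht)]

lemma nzPath_of_continuousOn {X : Type*} [TopologicalSpace X] {S : Set X} {Q : X → ℝ → ℂ}
    (hQ : ContinuousOn (fun p : X × ℝ => Q p.1 p.2) (S ×ˢ Icc 0 1))
    (h0 : ∀ x ∈ S, ∀ t ∈ Icc (0 : ℝ) 1, Q x t ≠ 0) {x : X} (hx : x ∈ S) : NZPath (Q x) :=
  ⟨hQ.comp (f := fun t => (x, t)) (by fun_prop) (fun t ht => ⟨hx, ht⟩), h0 x hx⟩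

lemma angVar_loop_eventually {X : Type*} [TopologicalSpace X] {S : Set X} {Q : X → ℝ → ℂ}
    (hQ : ContinuousOn (fun p : X × ℝ => Q p.1 p.2) (S ×ˢ Icc 0 1))
    (h0 : ∀ x ∈ S, ∀ t ∈ Icc (0 : ℝ) 1, Q x t ≠ 0)
    (hl : ∀ x ∈ S, Q x 0 = Q x 1) {x : X} (hx : x ∈ S) :
    ∀ᶠ y in 𝓝[S] x, angVar (Q y) = angVar (Q x) := by
  have nz := fun {y} (hy : y ∈ S) => nzPath_of_continuousOn hQ h0 hy
  have key : ∀ᶠ y in 𝓝[S] x, ∀ t ∈ Icc (0 : ℝ) 1, Q y t / Q x t ∈ Complex.slitPlane := by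
    refine isCompact_Icc.induction_on
      (p := fun s => ∀ᶠ y in 𝓝[S] x, ∀ t ∈ s, Q y t / Q x t ∈ Complex.slitPlane) ?_ ?_ ?_ ?_
    · simp
    · intro s t hst h
      filter_upwards [h] with y hy u hu using hy u (hst hu)
    · intro s t h h'
      filter_upwards [h, h'] with y hy hy' u hu
      exact hu.elim (hy u) (hy' u)
    · intro t ht
      have hc : ContinuousWithinAt (fun p : X × ℝ => Q p.1 p.2 / Q x p.2) (S ×ˢ Icc 0 1) (x, t) :=
        (hQ (x, t) ⟨hx, ht⟩).div
          (((nz hx).1 t ht).comp (t := Icc 0 1) continuousWithinAt_snd (fun p hp => hp.2))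
          (h0 x hx t ht)
      have hm : Complex.slitPlane ∈ 𝓝 (Q x t / Q x t) := by
        rw [div_self (h0 x hx t ht)]
        exact Complex.isOpen_slitPlane.mem_nhds (by simp)
      have := hc hm
      rw [nhdsWithin_prod_eq] at this
      obtain ⟨A, hA, B, hB, hAB⟩ := mem_prod_iff.1 (mem_map.1 this)
      refine ⟨B, hB, ?_⟩
      filter_upwards [hA] with y hy u hu
      exact hAB (show (y, u) ∈ A ×ˢ B from ⟨hy, hu⟩)
  filter_upwards [key, self_mem_nhdsWithin] with y hy hyS
  exact angVar_eq_of_div_slit (nz hyS) (nz hx) hy (by rw [hl y hyS, hl x hx])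

lemma angVar_loop_const {X : Type*} [TopologicalSpace X] {S : Set X} {Q : X → ℝ → ℂ}
    (hS : IsPreconnected S)
    (hQ : ContinuousOn (fun p : X × ℝ => Q p.1 p.2) (S ×ˢ Icc 0 1))
    (h0 : ∀ x ∈ S, ∀ t ∈ Icc (0 : ℝ) 1, Q x t ≠ 0)
    (hl : ∀ x ∈ S, Q x 0 = Q x 1) {x y : X} (hx : x ∈ S) (hy : y ∈ S) :
    angVar (Q x) = angVar (Q y) :=
  hS.induction₂ (fun a b => angVar (Q a) = angVar (Q b))
    (fun a ha => (angVar_loop_eventually hQ h0 hl ha).mono fun b hb => hb.symm)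
    (fun _ _ _ _ _ _ h h' => h.trans h') (fun _ _ _ _ h => h.symm) hx hy

/-- Homotopy of loops, with parameter in the unit interval. -/
lemma angVar_homotopy {Q : ℝ → ℝ → ℂ}
    (hQ : ContinuousOn (fun p : ℝ × ℝ => Q p.1 p.2) (Icc 0 1 ×ˢ Icc 0 1))
    (h0 : ∀ x ∈ Icc (0 : ℝ) 1, ∀ t ∈ Icc (0 : ℝ) 1, Q x t ≠ 0)
    (hl : ∀ x ∈ Icc (0 : ℝ) 1, Q x 0 = Q x 1) :
    angVar (Q 0) = angVar (Q 1) :=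
  angVar_loop_const isPreconnected_Icc hQ h0 hl (by simp) (by simp)

/-- The comparison lemma: if two families of paths have the same end points, the
difference of their angular variations is constant on preconnected sets. -/
lemma angVar_family_const {X : Type*} [TopologicalSpace X] {S : Set X} {Γ Δ : X → ℝ → ℂ}
    (hS : IsPreconnected S)
    (hΓ : ContinuousOn (fun p : X × ℝ => Γ p.1 p.2) (S ×ˢ Icc 0 1))
    (hΓ0 : ∀ x ∈ S, ∀ t ∈ Icc (0 : ℝ) 1, Γ x t ≠ 0)
    (hΔ : ContinuousOn (fun p : X × ℝ => Δ p.1 p.2) (S ×ˢ Icc 0 1))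
    (hΔ0 : ∀ x ∈ S, ∀ t ∈ Icc (0 : ℝ) 1, Δ x t ≠ 0)
    (e0 : ∀ x ∈ S, Γ x 0 = Δ x 0) (e1 : ∀ x ∈ S, Γ x 1 = Δ x 1) {x y : X}
    (hx : x ∈ S) (hy : y ∈ S) :
    angVar (Γ x) - angVar (Δ x) = angVar (Γ y) - angVar (Δ y) := by
  have nΓ := fun {y} (hy : y ∈ S) => nzPath_of_continuousOn hΓ hΓ0 hy
  have nΔ := fun {y} (hy : y ∈ S) => nzPath_of_continuousOn hΔ hΔ0 hy
  have key : ∀ x ∈ S, angVar (Γ x) - angVar (Δ x) = angVar (fun t => Γ x t * (Δ x t)⁻¹) := by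
    intro x hx
    have := angVar_mul ((nΓ hx).mul (nΔ hx).inv) (nΔ hx)
    rw [sub_eq_iff_eq_add, ← this]
    exact (angVar_congr (nΓ hx) fun t ht => by
      rw [inv_mul_cancel_right₀ (hΔ0 x hx t ht)]).symm
  rw [key x hx, key y hy]
  refine angVar_loop_const (Q := fun x t => Γ x t * (Δ x t)⁻¹) hS
    (hΓ.mul (hΔ.inv₀ fun p hp => hΔ0 p.1 hp.1 p.2 hp.2)) ?_ ?_ hx hy
  · intro x hx t ht
    exact mul_ne_zero (hΓ0 x hx t ht) (inv_ne_zero (hΔ0 x hx t ht))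
  · intro x hx
    rw [e0 x hx, e1 x hx, mul_inv_cancel₀ (hΔ0 x hx 0 (by simp)),
      mul_inv_cancel₀ (hΔ0 x hx 1 (by simp))]

lemma isPreconnected_ball_diff_finite {r : ℝ} (hr : 0 < r) {T : Set ℂ} (hT : T.Finite) :
    IsPreconnected (ball (0 : ℂ) r \ T) := by
  let e := OpenPartialHomeomorph.univBall (0 : ℂ) r
  have hs : e.source = univ := OpenPartialHomeomorph.univBall_source _ _
  have ht : e.target = ball 0 r := OpenPartialHomeomorph.univBall_target _ hr
  have hinj : Function.Injective e := by
    have := e.injOn; rw [hs] at this; exact injOn_univ.1 this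
  have himg : ball (0 : ℂ) r \ T = e '' (e ⁻¹' T)ᶜ := by
    ext x
    constructor
    · rintro ⟨hx, hxT⟩
      rw [← ht] at hx
      exact ⟨e.symm x, by simpa [e.right_inv hx] using hxT, e.right_inv hx⟩
    · rintro ⟨y, hy, rfl⟩
      exact ⟨by rw [← ht]; exact e.map_source (by simp [hs]), hy⟩
  rw [himg]
  have hcount : (e ⁻¹' T).Countable := (hT.preimage hinj.injOn).countable
  refine (hcount.isConnected_compl_of_one_lt_rank (by simp)).isPreconnected.image _ ?_
  have := e.continuousOn
  rw [hs] at this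
  exact this.mono (subset_univ _)

lemma interp_injective {G₀ G₁ : ℂ → ℂ} {A₀ A₁ : ℂ →L[ℝ] ℂ}
    (h₀ : HasStrictFDerivAt G₀ A₀ 0) (h₁ : HasStrictFDerivAt G₁ A₁ 0)
    (hA : ∀ τ ∈ Icc (0 : ℝ) 1, ∀ v : ℂ, (1 - τ) • A₀ v + τ • A₁ v = 0 → v = 0) :
    ∃ r > 0, ∀ x ∈ ball (0 : ℂ) r, ∀ y ∈ ball (0 : ℂ) r, x ≠ y → ∀ τ ∈ Icc (0 : ℝ) 1,
      (1 - τ) • G₀ x + τ • G₁ x ≠ (1 - τ) • G₀ y + τ • G₁ y := by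
  obtain ⟨m, hm, hmin⟩ : ∃ m > 0, ∀ τ ∈ Icc (0 : ℝ) 1, ∀ v : ℂ,
      m * ‖v‖ ≤ ‖(1 - τ) • A₀ v + τ • A₁ v‖ := by
    have hK : IsCompact (Icc (0 : ℝ) 1 ×ˢ sphere (0 : ℂ) 1) :=
      isCompact_Icc.prod (isCompact_sphere _ _)
    obtain ⟨⟨τ₀, v₀⟩, ⟨hτ₀, hv₀⟩, hle⟩ := hK.exists_isMinOn
      (f := fun p : ℝ × ℂ => ‖(1 - p.1) • A₀ p.2 + p.1 • A₁ p.2‖)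
      ⟨(0, 1), by simp⟩ (by fun_prop)
    have hv₀' : ‖v₀‖ = 1 := by simpa using hv₀
    refine ⟨‖(1 - τ₀) • A₀ v₀ + τ₀ • A₁ v₀‖, ?_, ?_⟩
    · rw [gt_iff_lt, norm_pos_iff]
      intro h
      rw [hA τ₀ hτ₀ v₀ h] at hv₀'
      simp at hv₀'
    · intro τ hτ v
      by_cases hv : v = 0
      · simp [hv]
      have hn : 0 < ‖v‖ := norm_pos_iff.2 hv
      have := hle (show (τ, ‖v‖⁻¹ • v) ∈ Icc (0 : ℝ) 1 ×ˢ sphere (0 : ℂ) 1 from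
        ⟨hτ, by simp [norm_smul, hv]⟩)
      simp only [map_smul, mem_ofPred_eq] at this
      rw [smul_comm _ ‖v‖⁻¹, smul_comm τ ‖v‖⁻¹, ← smul_add, norm_smul, norm_inv, norm_norm] at this
      calc _ ≤ (‖v‖⁻¹ * ‖(1 - τ) • A₀ v + τ • A₁ v‖) * ‖v‖ := by gcongr
        _ = _ := by field_simp
  have e₀ := (h₀.isLittleO.def (show (0 : ℝ) < m / 3 by positivity))
  have e₁ := (h₁.isLittleO.def (show (0 : ℝ) < m / 3 by positivity))
  obtain ⟨r, hr, hball⟩ := Metric.mem_nhds_iff.1 (e₀.and e₁)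
  refine ⟨r, hr, fun x hx y hy hxy τ hτ heq => ?_⟩
  have hmem : (x, y) ∈ ball ((0 : ℂ), (0 : ℂ)) r := by
    rw [← ball_prod_same]; exact ⟨hx, hy⟩
  obtain ⟨b₀, b₁⟩ := hball hmem
  simp only at b₀ b₁
  have hn : 0 < ‖x - y‖ := norm_pos_iff.2 (sub_ne_zero.2 hxy)
  have key := hmin τ hτ (x - y)
  have hid : (1 - τ) • A₀ (x - y) + τ • A₁ (x - y) =
      -((1 - τ) • (G₀ x - G₀ y - A₀ (x - y)) + τ • (G₁ x - G₁ y - A₁ (x - y))) := by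
    have h0 : (1 - τ) • (G₀ x - G₀ y) + τ • (G₁ x - G₁ y) = 0 := by
      rw [smul_sub, smul_sub]
      linear_combination heq
    rw [smul_sub _ (G₀ x - G₀ y), smul_sub _ (G₁ x - G₁ y)]
    linear_combination h0
  rw [hid, norm_neg] at key
  have := norm_add_le ((1 - τ) • (G₀ x - G₀ y - A₀ (x - y))) (τ • (G₁ x - G₁ y - A₁ (x - y)))
  rw [norm_smul, norm_smul, Real.norm_of_nonneg (sub_nonneg.2 hτ.2), Real.norm_of_nonneg hτ.1]
    at this
  have c₀ := mul_le_mul_of_nonneg_left b₀ (sub_nonneg.2 hτ.2)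
  have c₁ := mul_le_mul_of_nonneg_left b₁ hτ.1
  nlinarith [mul_pos hm hn]

/-- The local picture around a fixed point of the extended map: `ψ` is a punctured chart. -/
structure LocData {f : ℂ ≃ₜ ℂ} (I : HIsotopy f) where
  ψ : ℂ → ℂ
  χ : ℂ → ℂ
  c : ℝ → ℂ
  G : ℂ → ℂ
  A : ℂ →L[ℝ] ℂ
  r : ℝ
  hr : 0 < r
  ψ_cont : ContinuousOn ψ {0}ᶜ
  ψ_ne : ∀ u, u ≠ 0 → ψ u ≠ c 0
  χ_cont : ContinuousOn χ {c 0}ᶜ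
  χ_ne : ∀ z, z ≠ c 0 → χ z ≠ 0
  χψ : ∀ u, u ≠ 0 → χ (ψ u) = u
  c_cont : Continuous c
  c_one : c 1 = c 0
  F_ne : ∀ u, u ≠ 0 → ‖u‖ < r → ∀ t ∈ Icc (0 : ℝ) 1, I.F t (ψ u) ≠ c t
  G_deriv : HasStrictFDerivAt G A 0
  G_zero : G 0 = 0
  G_cont : ContinuousOn G (ball 0 r)
  G_ne : ∀ u, u ≠ 0 → ‖u‖ < r → G u ≠ 0
  G_conj : ∀ u, u ≠ 0 → ‖u‖ < r → ψ (G u) = f (ψ u)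
  A_inj : ∀ v, A v = 0 → v = 0

namespace LocData

variable {f : ℂ ≃ₜ ℂ} {I : HIsotopy f} (D : LocData I)

lemma ψ_inj {u v : ℂ} (hu : u ≠ 0) (hv : v ≠ 0) (h : D.ψ u = D.ψ v) : u = v := by
  rw [← D.χψ u hu, ← D.χψ v hv, h]

/-- The winding of the image of a circle is nonzero. -/
lemma winding_ne_zero (a : ℂ) (ha : a ≠ 0) :
    angVar (fun s => D.ψ (a * Complex.exp (2 * Real.pi * Complex.I * s)) - D.c 0) ≠ 0 := by
  intro h0
  set u : ℝ → ℂ := fun s => a * Complex.exp (2 * Real.pi * Complex.I * s) with hu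
  have hu0 : ∀ s, u s ≠ 0 := fun s => mul_ne_zero ha (Complex.exp_ne_zero _)
  have huc : Continuous u := by fun_prop
  have hu1 : u 0 = u 1 := by simp [hu]
  have nz : NZPath (fun s => D.ψ (u s) - D.c 0) :=
    ⟨(D.ψ_cont.comp_continuous huc (fun s => hu0 s)).sub continuous_const |>.continuousOn,
      fun s _ => sub_ne_zero.2 (D.ψ_ne _ (hu0 s))⟩
  obtain ⟨L, hL, e⟩ := nz.exists_log
  rw [angVar_of_log hL e] at h0
  have hpi := Real.pi_pos
  have him : (L 1).im = (L 0).im := by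
    field_simp at h0; linarith
  have hre : (L 1).re = (L 0).re := by
    have e0 := e 0 (by simp)
    have e1 := e 1 (by simp)
    rw [← hu1, e0] at e1
    have := congrArg (fun z => ‖z‖) e1
    simp only [Complex.norm_exp] at this
    exact (Real.exp_injective this).symm
  have hL01 : L 0 = L 1 := Complex.ext hre.symm him.symm
  have hom := angVar_homotopy
    (Q := fun τ s => D.χ (Complex.exp (τ * L s) + D.c 0)) ?_ ?_ ?_
  · have ev0 : angVar (fun s => D.χ (Complex.exp ((0 : ℝ) * L s) + D.c 0)) = 0 := by
      simp only [Complex.ofReal_zero, zero_mul]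
      exact angVar_const _ (D.χ_ne _ (by simp))
    rw [ev0] at hom
    have nzu : NZPath u := ⟨huc.continuousOn, fun s _ => hu0 s⟩
    rw [angVar_congr (γ := u) nzu ?_] at hom
    · rw [angVar_of_log (L := fun s => Complex.log a + 2 * Real.pi * Complex.I * s)
        (by fun_prop) (fun s _ => by rw [Complex.exp_add, Complex.exp_log ha])] at hom
      simp at hom
    · intro s hs
      simp only [Complex.ofReal_one, one_mul]
      rw [← e s hs, sub_add_cancel, D.χψ _ (hu0 s)]
  · refine D.χ_cont.comp (t := {D.c 0}ᶜ) ?_ ?_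
    · refine ContinuousOn.add (ContinuousOn.cexp (ContinuousOn.mul (by fun_prop) ?_))
        continuousOn_const
      exact hL.comp (by fun_prop) (fun p hp => hp.2)
    · intro p _
      simp [Complex.exp_ne_zero]
  · intro τ _ s _
    exact D.χ_ne _ (by simp [Complex.exp_ne_zero])
  · intro τ _
    simp only [hL01]

/-- If the derivative fixes a direction, then it preserves orientation: its
interpolations with the identity are invertible. -/
lemma interp_inj {v : ℂ} (hv : v ≠ 0) (hAv : D.A v = v) :
    ∀ τ ∈ Icc (0 : ℝ) 1, ∀ w : ℂ, (1 - τ) • w + τ • D.A w = 0 → w = 0 := by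
  intro τ hτ w hw
  by_contra hw0
  have hτ0 : 0 < τ := by
    rcases hτ.1.eq_or_lt with h | h
    · rw [← h] at hw; simp at hw; exact absurd hw hw0
    · exact h
  obtain ⟨μ, hμ⟩ : ∃ μ : ℝ, μ = (1 - τ) / τ := ⟨_, rfl⟩
  have hμ0 : 0 ≤ μ := by rw [hμ]; exact div_nonneg (sub_nonneg.2 hτ.2) hτ0.le
  have hAw : D.A w = -(μ • w) := by
    have : τ • D.A w = -((1 - τ) • w) := by linear_combination hw
    rw [← inv_smul_smul₀ hτ0.ne' (D.A w), this, hμ, smul_neg, smul_smul]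
    congr 2; ring
  have hμ1 : 0 < μ := by
    rcases hμ0.eq_or_lt with h | h
    · rw [← h] at hAw
      exact absurd (D.A_inj w (by simpa using hAw)) hw0
    · exact h
  -- the action on the line transverse to `v`
  have him : ∀ ζ : ℂ, (D.A (v * ζ) / v).im = -(μ * ζ.im) := by
    have hω : (w / v).im ≠ 0 := by
      intro h
      have h1 : w / v = ((w / v).re : ℂ) := by
        apply Complex.ext <;> simp [h]
      have h2 : w = (w / v).re • v := by
        rw [Complex.real_smul, ← h1, div_mul_cancel₀ _ hv]
      have h3 : D.A w = w := by
        rw [h2, map_smul, hAv]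
      rw [h3] at hAw
      have : (1 + μ) • w = 0 := by rw [add_smul, one_smul]; linear_combination hAw
      rcases smul_eq_zero.1 this with h | h
      · linarith
      · exact hw0 h
    intro ζ
    set ω := w / v with hωd
    have hwv : w = v * ω := by rw [hωd]; field_simp
    set y : ℝ := ζ.im / ω.im with hy
    set x : ℝ := ζ.re - y * ω.re with hx
    have hζ : ζ = x + y * ω := by
      apply Complex.ext
      · simp [hx]
      · simp [hy]; field_simp
    have hA : D.A (v * ζ) = x • v - (y * μ) • w := by
      have : v * ζ = x • v + y • w := by
        rw [hζ, hwv, Complex.real_smul, Complex.real_smul]; ring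
      rw [this, map_add, map_smul, map_smul, hAv, hAw, smul_neg, smul_smul, sub_eq_add_neg]
    rw [hA]
    have : (x • v - (y * μ) • w) / v = x - (y * μ : ℝ) * ω := by
      rw [Complex.real_smul, Complex.real_smul, sub_div, mul_div_assoc, div_self hv, mul_div_assoc,
        mul_one]
    rw [this]
    simp [hy]
    field_simp
  let R : ℂ →L[ℝ] ℂ :=
    (v / (starRingEnd ℂ) v) • (Complex.conjCLE : ℂ →L[ℝ] ℂ)
  have hvc : (starRingEnd ℂ) v ≠ 0 := by simpa using hv
  have hR : ∀ ζ : ℂ, R (v * ζ) = v * (starRingEnd ℂ) ζ := by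
    intro ζ
    simp [R]
    field_simp
  obtain ⟨r₁, hr₁, hinj⟩ := interp_injective D.G_deriv R.hasStrictFDerivAt (by
    intro σ hσ q hq
    obtain ⟨ζ, rfl⟩ : ∃ ζ, q = v * ζ := ⟨q / v, by field_simp⟩
    have h1 : (((1 - σ) • D.A (v * ζ) + σ • R (v * ζ)) / v).im = 0 := by rw [hq]; simp
    have h2 : ((1 - σ) • D.A (v * ζ) + σ • R (v * ζ)) / v =
        (1 - σ : ℝ) * (D.A (v * ζ) / v) + σ * (starRingEnd ℂ) ζ := by
      rw [hR, Complex.real_smul, Complex.real_smul]; field_simp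
    rw [h2] at h1
    simp only [Complex.add_im, Complex.re_ofReal_mul, Complex.im_ofReal_mul, him, Complex.conj_im]
      at h1
    have h3 : ((1 - σ) * μ + σ) * ζ.im = 0 := by linarith
    have h4 : 0 < (1 - σ) * μ + σ := by
      rcases hσ.1.eq_or_lt with h | h
      · rw [← h]; simpa using hμ1
      · have := mul_nonneg (sub_nonneg.2 hσ.2) hμ0
        linarith
    have h5 : ζ.im = 0 := (mul_eq_zero.1 h3).resolve_left h4.ne'
    have h6 : ζ = (ζ.re : ℂ) := by apply Complex.ext <;> simp [h5]
    have h7 : D.A (v * ζ) = v * ζ := by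
      rw [h6, mul_comm, ← Complex.real_smul, map_smul, hAv]
    have h8 : R (v * ζ) = v * ζ := by
      rw [hR, h6, Complex.conj_ofReal]
    rw [h7, h8, ← add_smul] at hq
    simpa using hq)
  -- the loop
  obtain ⟨ρ, hρ, hρ1, hρ2⟩ : ∃ ρ > 0, ρ < D.r ∧ ρ < r₁ :=
    ⟨min D.r r₁ / 2, by have := D.hr; positivity, by
      have := D.hr; have := min_le_left D.r r₁; linarith, by
      have := D.hr; have := min_le_right D.r r₁; linarith⟩
  have hvn : 0 < ‖v‖ := norm_pos_iff.2 hv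
  set a : ℂ := v * (ρ / ‖v‖ : ℝ) with ha
  have ha0 : a ≠ 0 := mul_ne_zero hv (by
    rw [Complex.ofReal_ne_zero]; positivity)
  have han : ‖a‖ = ρ := by
    rw [ha, norm_mul, Complex.norm_real, Real.norm_of_nonneg (by positivity)]; field_simp
  apply D.winding_ne_zero a ha0
  set u : ℝ → ℂ := fun s => a * Complex.exp (2 * Real.pi * Complex.I * s) with hu
  have hu0 : ∀ s, u s ≠ 0 := fun s => mul_ne_zero ha0 (Complex.exp_ne_zero _)
  have hun : ∀ s, ‖u s‖ = ρ := fun s => by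
    rw [hu]
    simp only [norm_mul, han]
    rw [show 2 * (Real.pi : ℂ) * Complex.I * s = ((2 * Real.pi * s : ℝ) : ℂ) * Complex.I by
      push_cast; ring, Complex.norm_exp_ofReal_mul_I, mul_one]
  have huc : Continuous u := by fun_prop
  have hu1 : u 0 = u 1 := by simp [hu]
  have hRu : ∀ s : ℝ, R (u s) = u (1 - s) := by
    intro s
    have : u s = v * ((ρ / ‖v‖ : ℝ) * Complex.exp (2 * Real.pi * Complex.I * s)) := by
      simp only [hu, ha]; ring
    rw [this, hR]
    simp only [hu, ha, map_mul, Complex.conj_ofReal, ← Complex.exp_conj, Complex.conj_I]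
    rw [mul_assoc v]
    congr 2
    rw [show 2 * (Real.pi : ℂ) * Complex.I * ((1 - s : ℝ) : ℂ) =
      2 * Real.pi * Complex.I + (starRingEnd ℂ) 2 * Real.pi * -Complex.I * s by
        push_cast; rw [Complex.conj_ofNat]; ring,
      Complex.exp_add, Complex.exp_two_pi_mul_I, one_mul]
  have hGc : Continuous (fun s => D.G (u s)) :=
    D.G_cont.comp_continuous huc (fun s => by simp [hun, hρ1])
  have hom1 := angVar_homotopy (Q := fun t s => I.F t (D.ψ (u s)) - D.c t) (by
      refine ContinuousOn.sub (Continuous.continuousOn ?_) (Continuous.continuousOn ?_)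
      · have h1 : Continuous fun s => D.ψ (u s) := D.ψ_cont.comp_continuous huc hu0
        exact I.cont.comp (continuous_fst.prodMk (h1.comp continuous_snd))
      · exact D.c_cont.comp continuous_fst)
    (fun t ht s _ => sub_ne_zero.2 (D.F_ne _ (hu0 s) (by rw [hun]; exact hρ1) t ht))
    (fun t _ => by rw [hu1])
  have hne : ∀ τ ∈ Icc (0 : ℝ) 1, ∀ s, (1 - τ) • D.G (u s) + τ • R (u s) ≠ 0 := by
    intro τ hτ s h
    refine hinj (u s) (by simp [hun, hρ2]) 0 (by simp [hr₁]) (hu0 s) τ hτ ?_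
    rw [h, D.G_zero]; simp
  have hom2 := angVar_homotopy
    (Q := fun τ s => D.ψ ((1 - τ) • D.G (u s) + τ • R (u s)) - D.c 0) (by
      refine ContinuousOn.sub (D.ψ_cont.comp ?_ ?_) continuousOn_const
      · have h1 : Continuous fun s => R (u s) := R.continuous.comp huc
        refine Continuous.continuousOn ?_
        exact ((continuous_const.sub continuous_fst).smul (hGc.comp continuous_snd)).add
          (continuous_fst.smul (h1.comp continuous_snd))
      · intro p hp
        exact hne p.1 hp.1 p.2)
    (fun τ hτ s _ => sub_ne_zero.2 (D.ψ_ne _ (hne τ hτ s)))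
    (fun τ _ => by rw [hu1])
  have nz : NZPath (fun s => D.ψ (u s) - D.c 0) :=
    ⟨(D.ψ_cont.comp_continuous huc (fun s => hu0 s)).sub continuous_const |>.continuousOn,
      fun s _ => sub_ne_zero.2 (D.ψ_ne _ (hu0 s))⟩
  have hrev := angVar_rev nz
  have e1 : (fun s => I.F 0 (D.ψ (u s)) - D.c 0) = fun s => D.ψ (u s) - D.c 0 := by
    funext s; rw [I.zero]; rfl
  have e2 : (fun s => I.F 1 (D.ψ (u s)) - D.c 1) =
      fun s => D.ψ ((1 - (0 : ℝ)) • D.G (u s) + (0 : ℝ) • R (u s)) - D.c 0 := by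
    funext s
    rw [I.one, D.c_one, ← D.G_conj _ (hu0 s) (by rw [hun]; exact hρ1)]
    simp
  have e3 : (fun s => D.ψ ((1 - (1 : ℝ)) • D.G (u s) + (1 : ℝ) • R (u s)) - D.c 0) =
      fun s => D.ψ (u (1 - s)) - D.c 0 := by
    funext s
    rw [hRu]; simp
  rw [e1, e2, hom2, e3, hrev] at hom1
  linarith

/-- The local conclusion. -/
theorem main : ∃ r > 0, ∃ M N : ℝ,
    (∀ u, u ≠ 0 → ‖u‖ < r → f (D.ψ u) = D.ψ u →
      angVar (fun t => I.F t (D.ψ u) - D.c t) = N) ∧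
    (∀ u v, u ≠ 0 → v ≠ 0 → u ≠ v → ‖u‖ < r → ‖v‖ < r → f (D.ψ u) = D.ψ u →
      f (D.ψ v) = D.ψ v → Enlace I (D.ψ u) (D.ψ v) = M) := by
  have hfix : ∀ u, u ≠ 0 → ‖u‖ < D.r → f (D.ψ u) = D.ψ u → D.G u = u := fun u hu hr h =>
    D.ψ_inj (D.G_ne u hu hr) hu (by rw [D.G_conj u hu hr, h])
  by_cases hev : ∃ v, v ≠ 0 ∧ D.A v = v
  swap
  · push Not at hev
    have hd : HasStrictFDerivAt (fun u => D.G u - u) (D.A - ContinuousLinearMap.id ℝ ℂ) 0 :=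
      D.G_deriv.sub (hasStrictFDerivAt_id _)
    obtain ⟨r, hr, hinj⟩ := interp_injective hd hd (by
      intro τ _ v hv
      rw [← add_smul] at hv
      by_contra h
      refine hev v h ?_
      simpa [sub_eq_zero] using hv)
    have hno : ∀ u, u ≠ 0 → ‖u‖ < min r D.r → f (D.ψ u) = D.ψ u → False := by
      intro u hu hur h
      have h1 := hfix u hu (hur.trans_le (min_le_right _ _)) h
      refine hinj u (by simpa using hur.trans_le (min_le_left _ _)) 0 (by simpa using hr) hu 0
        (by simp) ?_
      simp [h1, D.G_zero]
    exact ⟨min r D.r, lt_min hr D.hr, 0, 0, fun u hu hr h => (hno u hu hr h).elim,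
      fun u v hu _ _ hr _ h => (hno u hu hr h).elim⟩
  obtain ⟨v, hv, hAv⟩ := hev
  obtain ⟨r₁, hr₁, hinj⟩ := interp_injective (hasStrictFDerivAt_id (𝕜 := ℝ) (0 : ℂ)) D.G_deriv
    (by simpa using D.interp_inj hv hAv)
  obtain ⟨r, hr, hrD, hr1⟩ : ∃ r > 0, r ≤ D.r ∧ r ≤ r₁ :=
    ⟨min D.r r₁, lt_min D.hr hr₁, min_le_left _ _, min_le_right _ _⟩
  let P : ℂ → ℝ → ℂ := fun u τ => (1 - τ) • u + τ • D.G u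
  have hPc : ContinuousOn (fun p : ℂ × ℝ => P p.1 p.2) (ball 0 r ×ˢ Icc 0 1) := by
    refine ContinuousOn.add (by fun_prop) (ContinuousOn.smul continuous_snd.continuousOn ?_)
    exact D.G_cont.comp (by fun_prop) (fun p hp => ball_subset_ball hrD hp.1)
  have hPne : ∀ u ∈ ball (0 : ℂ) r, ∀ v ∈ ball (0 : ℂ) r, u ≠ v → ∀ τ ∈ Icc (0 : ℝ) 1,
      P u τ ≠ P v τ := fun u hu v hv huv τ hτ =>
    hinj u (ball_subset_ball hr1 hu) v (ball_subset_ball hr1 hv) huv τ hτ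
  have hP0 : ∀ u ∈ ball (0 : ℂ) r, u ≠ 0 → ∀ τ ∈ Icc (0 : ℝ) 1, P u τ ≠ 0 := by
    intro u hu hu0 τ hτ
    have := hPne u hu 0 (by simpa using hr) hu0 τ hτ
    simpa [P, D.G_zero] using this
  have hPfix : ∀ u, D.G u = u → ∀ τ, P u τ = u := by
    intro u hu τ
    simp only [P, hu, ← add_smul]; simp
  have hPz : ∀ u, P u 0 = u := by simp [P]
  have hPo : ∀ u, P u 1 = D.G u := by simp [P]
  have hψP : ContinuousOn (fun p : ℂ × ℝ => D.ψ (P p.1 p.2)) ((ball 0 r \ {0}) ×ˢ Icc 0 1) := by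
    refine D.ψ_cont.comp (hPc.mono (prod_mono sdiff_subset Subset.rfl)) ?_
    exact fun p hp => hP0 p.1 hp.1.1 hp.1.2 p.2 hp.2
  have hFψ : ContinuousOn (fun p : ℂ × ℝ => I.F p.2 (D.ψ p.1)) ((ball 0 r \ {0}) ×ˢ Icc 0 1) := by
    refine I.cont.comp_continuousOn (ContinuousOn.prodMk (by fun_prop) ?_)
    exact D.ψ_cont.comp (by fun_prop) (fun p hp => hp.1.2)
  -- first part
  have hone : ∀ u ∈ ball (0 : ℂ) r \ {0}, ∀ v ∈ ball (0 : ℂ) r \ {0},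
      f (D.ψ u) = D.ψ u → f (D.ψ v) = D.ψ v →
      angVar (fun t => I.F t (D.ψ u) - D.c t) = angVar (fun t => I.F t (D.ψ v) - D.c t) := by
    intro u hu v hv hfu hfv
    have key := angVar_family_const (Γ := fun u t => I.F t (D.ψ u) - D.c t)
      (Δ := fun u t => D.ψ (P u t) - D.c 0)
      (isPreconnected_ball_diff_finite hr (finite_singleton (0 : ℂ)))
      (hFψ.sub (D.c_cont.comp continuous_snd).continuousOn)
      (fun x hx t ht => sub_ne_zero.2 (D.F_ne x hx.2 (by
        have := hx.1; simp at this; linarith) t ht))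
      (hψP.sub continuousOn_const)
      (fun x hx t ht => sub_ne_zero.2 (D.ψ_ne _ (hP0 x hx.1 hx.2 t ht)))
      (fun x hx => by rw [hPz, I.zero]; rfl)
      (fun x hx => by
        rw [hPo, I.one, D.c_one, D.G_conj x hx.2 (by have := hx.1; simp at this; linarith)])
      hu hv
    have hz : ∀ u ∈ ball (0 : ℂ) r \ {0}, f (D.ψ u) = D.ψ u →
        angVar (fun t => D.ψ (P u t) - D.c 0) = 0 := by
      intro u hu hfu
      have := hPfix u (hfix u hu.2 (by have := hu.1; simp at this; linarith) hfu)
      simp only [this]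
      exact angVar_const _ (sub_ne_zero.2 (D.ψ_ne _ hu.2))
    rw [hz u hu hfu, hz v hv hfv] at key
    simpa using key
  -- second part
  have nzΓ : ∀ x y, x ≠ 0 → y ≠ 0 → x ≠ y → NZPath (fun t => I.F t (D.ψ x) - I.F t (D.ψ y)) := by
    intro x y hx hy hxy
    refine ⟨Continuous.continuousOn ?_, fun t _ => sub_ne_zero.2 fun h =>
      hxy (D.ψ_inj hx hy ((I.F t).injective h))⟩
    exact (I.cont.comp (continuous_id.prodMk continuous_const)).sub
      (I.cont.comp (continuous_id.prodMk continuous_const))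
  have hψPy : ∀ y ∈ ball (0 : ℂ) r \ {0}, ContinuousOn (fun t => D.ψ (P y t)) (Icc 0 1) :=
    fun y hy => hψP.comp (f := fun t : ℝ => (y, t)) (by fun_prop) (fun t ht => ⟨hy, ht⟩)
  have hψPne : ∀ x ∈ ball (0 : ℂ) r \ {0}, ∀ y ∈ ball (0 : ℂ) r \ {0}, x ≠ y →
      ∀ t ∈ Icc (0 : ℝ) 1, D.ψ (P x t) - D.ψ (P y t) ≠ 0 := by
    intro x hx y hy hxy t ht
    exact sub_ne_zero.2 fun h => hPne x hx.1 y hy.1 hxy t ht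
      (D.ψ_inj (hP0 x hx.1 hx.2 t ht) (hP0 y hy.1 hy.2 t ht) h)
  let W : ℂ → ℂ → ℝ := fun x y => angVar (fun t => I.F t (D.ψ x) - I.F t (D.ψ y)) -
    angVar (fun t => D.ψ (P x t) - D.ψ (P y t))
  have hWsymm : ∀ x ∈ ball (0 : ℂ) r \ {0}, ∀ y ∈ ball (0 : ℂ) r \ {0}, x ≠ y →
      W x y = W y x := by
    intro x hx y hy hxy
    have h1 := angVar_neg (nzΓ x y hx.2 hy.2 hxy)
    have h2 := angVar_neg (γ := fun t => D.ψ (P x t) - D.ψ (P y t))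
      ⟨(hψPy x hx).sub (hψPy y hy), hψPne x hx y hy hxy⟩
    simp only [neg_sub] at h1 h2
    simp only [W, h1, h2]
  have hWconst : ∀ y ∈ ball (0 : ℂ) r \ {0}, ∀ x ∈ ball (0 : ℂ) r \ {0},
      ∀ x' ∈ ball (0 : ℂ) r \ {0}, x ≠ y → x' ≠ y → W x y = W x' y := by
    intro y hy x hx x' hx' hxy hxy'
    have hsub : ball (0 : ℂ) r \ {0, y} ⊆ ball (0 : ℂ) r \ {0} :=
      sdiff_subset_sdiff_right (by simp)
    have hney : ∀ x ∈ ball (0 : ℂ) r \ {0, y}, x ≠ y := fun x hx h => hx.2 (by simp [h])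
    refine angVar_family_const (S := ball (0 : ℂ) r \ {0, y})
      (Γ := fun x t => I.F t (D.ψ x) - I.F t (D.ψ y))
      (Δ := fun x t => D.ψ (P x t) - D.ψ (P y t))
      (isPreconnected_ball_diff_finite hr (by simp))
      ((hFψ.mono (prod_mono hsub Subset.rfl)).sub
        (I.cont.comp (continuous_snd.prodMk continuous_const)).continuousOn)
      (fun x hx t ht => (nzΓ x y (hsub hx).2 hy.2 (hney x hx)).2 t ht)
      ((hψP.mono (prod_mono hsub Subset.rfl)).sub
        ((hψPy y hy).comp (by fun_prop) (fun p hp => hp.2)))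
      (fun x hx t ht => hψPne x (hsub hx) y hy (hney x hx) t ht)
      (fun x hx => by rw [hPz, hPz, I.zero]; rfl)
      (fun x hx => by
        have h1 := hsub hx
        rw [hPo, hPo, I.one, D.G_conj x h1.2 (by have := h1.1; simp at this; linarith),
          D.G_conj y hy.2 (by have := hy.1; simp at this; linarith)])
      ⟨hx.1, by simpa [hxy] using hx.2⟩ ⟨hx'.1, by simpa [hxy'] using hx'.2⟩
  have hWall : ∀ x ∈ ball (0 : ℂ) r \ {0}, ∀ y ∈ ball (0 : ℂ) r \ {0},
      ∀ x' ∈ ball (0 : ℂ) r \ {0}, ∀ y' ∈ ball (0 : ℂ) r \ {0}, x ≠ y → x' ≠ y' →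
      W x y = W x' y' := by
    intro x hx y hy x' hx' y' hy' hxy hxy'
    obtain ⟨z, hz, hzT⟩ : ∃ z ∈ ball (0 : ℂ) r, z ∉ ({0, y, x'} : Set ℂ) := by
      have hinf : (ball (0 : ℂ) r).Infinite :=
        infinite_of_mem_nhds 0 (ball_mem_nhds _ hr)
      exact (hinf.exists_notMem_finite (by simp)).imp fun z h => h
    simp only [mem_insert_iff, mem_singleton_iff, not_or] at hzT
    have hz' : z ∈ ball (0 : ℂ) r \ {0} := ⟨hz, hzT.1⟩
    rw [hWconst y hy x hx z hz' hxy hzT.2.1, hWsymm z hz' y hy hzT.2.1,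
      hWconst z hz' y hy x' hx' (Ne.symm hzT.2.1) (Ne.symm hzT.2.2),
      hWsymm x' hx' z hz' (Ne.symm hzT.2.2), hWconst x' hx' z hz' y' hy' hzT.2.2 hxy'.symm,
      hWsymm y' hy' x' hx' hxy'.symm]
  have hWfix : ∀ x ∈ ball (0 : ℂ) r \ {0}, ∀ y ∈ ball (0 : ℂ) r \ {0}, x ≠ y →
      f (D.ψ x) = D.ψ x → f (D.ψ y) = D.ψ y → Enlace I (D.ψ x) (D.ψ y) = W x y := by
    intro x hx y hy hxy hfx hfy
    have h1 := hPfix x (hfix x hx.2 (by have := hx.1; simp at this; linarith) hfx)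
    have h2 := hPfix y (hfix y hy.2 (by have := hy.1; simp at this; linarith) hfy)
    simp only [W, Enlace, h1, h2]
    rw [angVar_const _ (sub_ne_zero.2 fun h => hxy (D.ψ_inj hx.2 hy.2 h)), sub_zero]
  have hmem : ∀ u, u ≠ 0 → ‖u‖ < r → u ∈ ball (0 : ℂ) r \ {0} := fun u h h' =>
    ⟨by simpa using h', h⟩
  have hN : ∃ N : ℝ, ∀ u, u ≠ 0 → ‖u‖ < r → f (D.ψ u) = D.ψ u →
      angVar (fun t => I.F t (D.ψ u) - D.c t) = N := by
    by_cases h : ∃ u, u ≠ 0 ∧ ‖u‖ < r ∧ f (D.ψ u) = D.ψ u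
    · obtain ⟨u, hu, hur, hfu⟩ := h
      exact ⟨_, fun v hv hvr hfv => hone v (hmem v hv hvr) u (hmem u hu hur) hfv hfu⟩
    · push Not at h
      exact ⟨0, fun u hu hr hf => (h u hu hr hf).elim⟩
  obtain ⟨N, hN⟩ := hN
  refine ⟨r, hr, W (r / 2 : ℝ) (r / 3 : ℝ), N, hN, ?_⟩
  intro u v hu hv huv hur hvr hfu hfv
  rw [hWfix u (hmem u hu hur) v (hmem v hv hvr) huv hfu hfv]
  have q : ∀ k : ℝ, 1 < k → ((r / k : ℝ) : ℂ) ∈ ball (0 : ℂ) r \ {0} := by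
    intro k hk
    refine hmem _ (by rw [Complex.ofReal_ne_zero]; positivity) ?_
    rw [Complex.norm_real, Real.norm_of_nonneg (by positivity)]
    exact div_lt_self hr hk
  refine hWall u (hmem u hu hur) v (hmem v hv hvr) _ (q 2 (by norm_num)) _ (q 3 (by norm_num)) huv ?_
  rw [Ne, Complex.ofReal_inj]
  intro h
  field_simp at h
  norm_num at h

end LocData

open Manifold in
lemma exists_sphere_chart (n w : 𝕊²) (hne : w ≠ n) :
    ∃ (κ : 𝕊² → ℂ) (κ' : ℂ → 𝕊²), ContinuousOn κ {n}ᶜ ∧ Continuous κ' ∧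
      (∀ x, x ≠ n → κ' (κ x) = x) ∧ (∀ u, κ (κ' u) = u) ∧ (∀ u, κ' u ≠ n) ∧ κ w = 0 ∧
      ∀ g : 𝕊² → 𝕊², ContMDiff (𝓡 2) (𝓡 2) 1 g → g w = w →
        ContDiffAt ℝ 1 (fun u => κ (g (κ' u))) 0 := by
  haveI : Fact (Module.finrank ℝ (EuclideanSpace ℝ (Fin 3)) = 2 + 1) := ⟨finrank_euclideanSpace_fin⟩
  let σ : OpenPartialHomeomorph 𝕊² (EuclideanSpace ℝ (Fin 2)) := stereographic' 2 n
  have hs : σ.source = {n}ᶜ := stereographic'_source n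
  have ht : σ.target = univ := stereographic'_target n
  let ι : ℂ ≃L[ℝ] EuclideanSpace ℝ (Fin 2) :=
    Complex.orthonormalBasisOneI.repr.toContinuousLinearEquiv
  refine ⟨fun x => ι.symm (σ x) - ι.symm (σ w), fun u => σ.symm (ι (u + ι.symm (σ w))), ?_, ?_, ?_,
    ?_, ?_, ?_, ?_⟩
  · have := σ.continuousOn
    rw [hs] at this
    exact (ι.symm.continuous.comp_continuousOn this).sub continuousOn_const
  · have := σ.continuousOn_symm
    rw [ht] at this
    have h2 := continuousOn_univ.1 this
    exact h2.comp (ι.continuous.comp (by fun_prop))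
  · intro x hx
    simp only [sub_add_cancel, ContinuousLinearEquiv.apply_symm_apply]
    exact σ.left_inv (by rw [hs]; exact hx)
  · intro u
    simp only
    rw [σ.right_inv (by rw [ht]; trivial)]
    simp
  · intro u
    have := σ.map_target (x := ι (u + ι.symm (σ w))) (by rw [ht]; trivial)
    rw [hs] at this
    exact this
  · simp
  · intro g hg hgw
    have hσ : σ ∈ IsManifold.maximalAtlas (𝓡 2) 1 𝕊² :=
      IsManifold.subset_maximalAtlas ⟨n, rfl⟩
    have h1 := (contMDiffAt_iff_of_mem_maximalAtlas (x := w) (f := g) hσ hσ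
      (by rw [hs]; exact hne) (by rw [hgw, hs]; exact hne)).1 (hg w)
    have h2 := h1.2
    simp only [modelWithCornersSelf_coe, range_id] at h2
    rw [contDiffWithinAt_univ] at h2
    have h3 : ContDiffAt ℝ 1 (fun y => σ (g (σ.symm y))) (σ w) := by
      simpa [Function.comp_def] using h2
    have h4 : ContDiffAt ℝ 1 (fun u : ℂ => ι (u + ι.symm (σ w))) 0 :=
      (ι.contDiff.comp (contDiff_id.add contDiff_const)).contDiffAt
    have h5 : ContDiffAt ℝ 1 (fun u : ℂ => σ (g (σ.symm (ι (u + ι.symm (σ w)))))) 0 :=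
      ContDiffAt.comp (g := fun y => σ (g (σ.symm y))) (0 : ℂ) (by simpa using h3) h4
    exact (ι.symm.contDiff.contDiffAt.comp (0 : ℂ) h5).sub contDiffAt_const

/-- The finite part of a point of the one-point compactification. -/
def opToC (x : OnePoint ℂ) : ℂ := x.elim 0 id

lemma opToC_coe (z : ℂ) : opToC (z : OnePoint ℂ) = z := rfl

lemma coe_opToC {x : OnePoint ℂ} (hx : x ≠ OnePoint.infty) : ((opToC x : ℂ) : OnePoint ℂ) = x := by
  induction x using OnePoint.rec with
  | infty => exact absurd rfl hx
  | coe z => rfl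

lemma continuousOn_opToC : ContinuousOn opToC {OnePoint.infty}ᶜ := by
  intro x hx
  refine ContinuousAt.continuousWithinAt ?_
  rw [← coe_opToC hx, ← OnePoint.isOpenEmbedding_coe.continuousAt_iff]
  exact continuousAt_id

lemma exists_locData {f : ℂ ≃ₜ ℂ} (I : HIsotopy f) (φ : OnePoint ℂ ≃ₜ 𝕊²)
    (hg : IsC1SphereDiffeo fun x => φ (OnePoint.map (⇑f) (φ.symm x)))
    (n w : 𝕊²) (hne : w ≠ n) (hw : OnePoint.map (⇑f) (φ.symm w) = φ.symm w)
    (c : ℝ → ℂ) (hc : Continuous c) (hc1 : c 1 = c 0)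
    (hset : ∀ x : OnePoint ℂ, (x ≠ φ.symm n ∧ x ≠ φ.symm w) ↔
      (x ≠ OnePoint.infty ∧ x ≠ ((c 0 : ℂ) : OnePoint ℂ)))
    (hF : ∀ᶠ x in 𝓝 (φ.symm w), ∀ z : ℂ, (z : OnePoint ℂ) = x → z ≠ c 0 →
      ∀ t ∈ Icc (0 : ℝ) 1, I.F t z ≠ c t) :
    ∃ D : LocData I, D.c = c ∧ ∀ r > 0, ∀ᶠ x in 𝓝 (φ.symm w), ∀ z : ℂ, (z : OnePoint ℂ) = x →
      z ≠ c 0 → ∃ u, u ≠ 0 ∧ ‖u‖ < r ∧ D.ψ u = z := by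
  obtain ⟨hbij, hgC, g', hl, hr', hgC'⟩ := hg
  set g : 𝕊² → 𝕊² := fun x => φ (OnePoint.map (⇑f) (φ.symm x)) with hgdef
  have hgw : g w = w := by simp [hgdef, hw]
  have hgw' : g' w = w := by rw [← hgw, hl w, hgw]
  obtain ⟨κ, κ', κc, κc', hκl, hκr, hκn, hκw, hκC⟩ := exists_sphere_chart n w hne
  have hκ0 : κ' 0 = w := by rw [← hκw, hκl w hne]
  have hκ'ne : ∀ u, u ≠ 0 → κ' u ≠ w := fun u hu h => hu (by rw [← hκr u, h, hκw])
  have κcw : ContinuousAt κ w := κc.continuousAt (isOpen_compl_singleton.mem_nhds hne)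
  have hmem : ∀ u, u ≠ 0 → φ.symm (κ' u) ≠ OnePoint.infty ∧
      φ.symm (κ' u) ≠ ((c 0 : ℂ) : OnePoint ℂ) := fun u hu =>
    (hset _).1 ⟨fun h => hκn u (φ.symm.injective h), fun h => hκ'ne u hu (φ.symm.injective h)⟩
  have hχ : ∀ z : ℂ, z ≠ c 0 → φ z ≠ n ∧ φ z ≠ w := by
    intro z hz
    have := (hset z).2 ⟨OnePoint.coe_ne_infty z, fun h => hz (OnePoint.coe_injective h)⟩
    exact ⟨fun h => this.1 (by rw [← h]; simp), fun h => this.2 (by rw [← h]; simp)⟩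
  let G : ℂ → ℂ := fun u => κ (g (κ' u))
  let G' : ℂ → ℂ := fun u => κ (g' (κ' u))
  have hG0 : G 0 = 0 := by simp only [G, hκ0, hgw, hκw]
  have hGs : HasStrictFDerivAt G (fderiv ℝ G 0) 0 :=
    (hκC g hgC hgw).hasStrictFDerivAt (by simp)
  have hGs' : HasStrictFDerivAt G' (fderiv ℝ G' 0) 0 :=
    (hκC g' hgC' hgw').hasStrictFDerivAt (by simp)
  have hgn : ∀ᶠ u in 𝓝 (0 : ℂ), g (κ' u) ≠ n := by
    have h1 : ContinuousAt (fun u => g (κ' u)) 0 := (hgC.continuous.comp κc').continuousAt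
    exact h1.eventually_ne (by rw [hκ0, hgw]; exact hne)
  have hAinj : ∀ v, fderiv ℝ G 0 v = 0 → v = 0 := by
    intro v hv
    have hcomp : HasFDerivAt (G' ∘ G) ((fderiv ℝ G' 0).comp (fderiv ℝ G 0)) 0 := by
      refine HasFDerivAt.comp 0 ?_ hGs.hasFDerivAt
      rw [hG0]; exact hGs'.hasFDerivAt
    have hid : G' ∘ G =ᶠ[𝓝 0] id := by
      filter_upwards [hgn] with u hu
      simp only [Function.comp, G, G', hκl _ hu, hl _, hκr, id]
    have := (hcomp.congr_of_eventuallyEq hid.symm).unique (hasFDerivAt_id (0 : ℂ))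
    have h2 := congrArg (fun L : ℂ →L[ℝ] ℂ => L v) this
    simp [hv] at h2
    exact h2.symm
  have hGc : ∃ s ∈ 𝓝 (0 : ℂ), ContinuousOn G s := by
    obtain ⟨K, s, hs, hL⟩ := hGs.exists_lipschitzOnWith
    exact ⟨s, hs, hL.continuousOn⟩
  obtain ⟨s, hs, hGs2⟩ := hGc
  have hψ0 : Tendsto (fun u => φ.symm (κ' u)) (𝓝 0) (𝓝 (φ.symm w)) := by
    have h1 : ContinuousAt (fun u => φ.symm (κ' u)) 0 :=
      (φ.symm.continuous.comp κc').continuousAt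
    have h2 : φ.symm (κ' 0) = φ.symm w := by rw [hκ0]
    rw [← h2]; exact h1
  obtain ⟨r, hr, hball⟩ := Metric.mem_nhds_iff.1 ((hgn.and (hψ0.eventually hF)).and hs)
  have hin : ∀ u : ℂ, ‖u‖ < r → u ∈ ball (0 : ℂ) r := fun u hu => by simpa using hu
  let D : LocData I :=
    { ψ := fun u => opToC (φ.symm (κ' u))
      χ := fun z => κ (φ z)
      c := c
      G := G
      A := fderiv ℝ G 0
      r := r
      hr := hr
      ψ_cont := continuousOn_opToC.comp (φ.symm.continuous.comp κc').continuousOn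
        (fun u hu => (hmem u hu).1)
      ψ_ne := fun u hu h => (hmem u hu).2 (by rw [← h, coe_opToC (hmem u hu).1])
      χ_cont := κc.comp (φ.continuous.comp OnePoint.continuous_coe).continuousOn
        (fun z hz => (hχ z hz).1)
      χ_ne := fun z hz h => (hχ z hz).2 (by
        rw [← hκl _ (hχ z hz).1, h, hκ0])
      χψ := fun u hu => by
        rw [coe_opToC (hmem u hu).1, φ.apply_symm_apply, hκr]
      c_cont := hc
      c_one := hc1
      F_ne := fun u hu hur => (hball (hin u hur)).1.2 _ (coe_opToC (hmem u hu).1) (fun h =>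
        (hmem u hu).2 (by rw [← h, coe_opToC (hmem u hu).1]))
      G_deriv := hGs
      G_zero := hG0
      G_cont := hGs2.mono fun u hu => (hball hu).2
      G_ne := fun u hu hur h => by
        have h1 : g (κ' u) = w := by
          rw [← hκl _ (hball (hin u hur)).1.1, ← hκ0]; exact congrArg κ' h
        exact hκ'ne u hu (hbij.1 (h1.trans hgw.symm))
      G_conj := fun u hu hur => by
        simp only [G]
        rw [hκl _ (hball (hin u hur)).1.1]
        simp only [hgdef, φ.symm_apply_apply]
        conv_lhs => rw [← coe_opToC (hmem u hu).1]
        rw [OnePoint.map_some, opToC_coe]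
      A_inj := hAinj }
  refine ⟨D, rfl, fun ρ hρ => ?_⟩
  have hev : ∀ᶠ x in 𝓝 (φ.symm w), ‖κ (φ x)‖ < ρ := by
    have h1 : ContinuousAt (fun x => ‖κ (φ x)‖) (φ.symm w) := by
      refine ContinuousAt.norm (ContinuousAt.comp ?_ φ.continuous.continuousAt)
      rw [φ.apply_symm_apply]; exact κcw
    exact h1.eventually_lt continuousAt_const (by simpa [hκw] using hρ)
  filter_upwards [hev] with x hx z hzx hz
  refine ⟨κ (φ x), ?_, hx, ?_⟩
  · subst hzx
    exact D.χ_ne z hz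
  · subst hzx
    simp only [D]
    rw [hκl _ (hχ z hz).1, φ.symm_apply_apply, opToC_coe]

lemma local_conclusion {f : ℂ ≃ₜ ℂ} (I : HIsotopy f) (φ : OnePoint ℂ ≃ₜ 𝕊²)
    (hg : IsC1SphereDiffeo fun x => φ (OnePoint.map (⇑f) (φ.symm x)))
    (a b : OnePoint ℂ) (hne : b ≠ a) (hw : OnePoint.map (⇑f) b = b)
    (c : ℝ → ℂ) (hc : Continuous c) (hc1 : c 1 = c 0)
    (hset : ∀ x : OnePoint ℂ, (x ≠ a ∧ x ≠ b) ↔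
      (x ≠ OnePoint.infty ∧ x ≠ ((c 0 : ℂ) : OnePoint ℂ)))
    (hF : ∀ᶠ x in 𝓝 b, ∀ z : ℂ, (z : OnePoint ℂ) = x → z ≠ c 0 →
      ∀ t ∈ Icc (0 : ℝ) 1, I.F t z ≠ c t) :
    ∃ M N : ℝ, ∃ U ∈ 𝓝 b,
      (∀ z : ℂ, (z : OnePoint ℂ) ∈ U → z ≠ c 0 → f z = z →
        angVar (fun t => I.F t z - c t) = N) ∧
      (∀ z z' : ℂ, (z : OnePoint ℂ) ∈ U → (z' : OnePoint ℂ) ∈ U → z ≠ c 0 → z' ≠ c 0 →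
        z ≠ z' → f z = z → f z' = z' → Enlace I z z' = M) := by
  obtain ⟨D, hDc, hD⟩ := exists_locData I φ hg (φ a) (φ b) (fun h => hne (φ.injective h))
    (by simpa using hw) c hc hc1 (by simpa using hset) (by simpa using hF)
  obtain ⟨r, hr, M, N, h1, h2⟩ := D.main
  have hU := hD r hr
  rw [φ.symm_apply_apply] at hU
  refine ⟨M, N, _, hU, ?_, ?_⟩
  · intro z hz hzc hfz
    obtain ⟨u, hu, hur, rfl⟩ := hz z rfl hzc
    rw [← hDc]
    exact h1 u hu hur hfz
  · intro z z' hz hz' hzc hzc' hzz hfz hfz'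
    obtain ⟨u, hu, hur, rfl⟩ := hz z rfl hzc
    obtain ⟨v, hv, hvr, rfl⟩ := hz' z' rfl hzc'
    exact h2 u v hu hv (fun h => hzz (by rw [h])) hur hvr hfz hfz'

lemma enlace_nz {f : ℂ ≃ₜ ℂ} (I : HIsotopy f) {z z' : ℂ} (h : z ≠ z') :
    NZPath (fun t => I.F t z - I.F t z') := by
  refine ⟨Continuous.continuousOn ?_, fun t _ => sub_ne_zero.2 ((I.F t).injective.ne h)⟩
  exact (I.cont.comp (f := fun t : ℝ => (t, z)) (by fun_prop)).sub
    (I.cont.comp (f := fun t : ℝ => (t, z')) (by fun_prop))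

lemma enlace_comm {f : ℂ ≃ₜ ℂ} (I : HIsotopy f) {z z' : ℂ} (h : z ≠ z') :
    Enlace I z z' = Enlace I z' z := by
  have := angVar_neg (enlace_nz I h)
  unfold Enlace
  rw [← this]
  simp only [neg_sub]

lemma eventually_infty_notMem {K : Set ℂ} (hK : IsCompact K) :
    ∀ᶠ x in 𝓝 (OnePoint.infty : OnePoint ℂ), ∀ z : ℂ, (z : OnePoint ℂ) = x → z ∉ K := by
  have h := (OnePoint.isOpen_compl_image_coe (s := K)).2 ⟨hK.isClosed, hK⟩
  filter_upwards [h.mem_nhds (by simp)] with x hx z hz hzK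
  exact hx ⟨z, hzK, hz⟩

/-- Points which enter a given closed ball during the isotopy stay in a compact set. -/
lemma exists_compact_escape {f : ℂ ≃ₜ ℂ} (I : HIsotopy f) (R : ℝ) :
    ∃ K : Set ℂ, IsCompact K ∧ ∀ z, z ∉ K → ∀ t ∈ Icc (0 : ℝ) 1, R < ‖I.F t z‖ := by
  refine ⟨(fun p : ℝ × ℂ => (I.F p.1).symm p.2) '' (Icc (0 : ℝ) 1 ×ˢ closedBall 0 R),
    (isCompact_Icc.prod (isCompact_closedBall _ _)).image I.cont_symm, ?_⟩
  intro z hz t ht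
  by_contra hlt
  exact hz ⟨(t, I.F t z), ⟨ht, by simpa using hlt⟩, by simp⟩

lemma infinity_conclusion {f : ℂ ≃ₜ ℂ} (I : HIsotopy f) (φ : OnePoint ℂ ≃ₜ 𝕊²)
    (hg : IsC1SphereDiffeo fun x => φ (OnePoint.map (⇑f) (φ.symm x))) :
    ∃ M N : ℝ, ∃ K : Set ℂ, IsCompact K ∧
      (∀ z, z ∉ K → f z = z → Tourne I z = N) ∧
      (∀ z z', z ∉ K → z' ∉ K → z ≠ z' → f z = z → f z' = z' → Enlace I z z' = M) := by
  obtain ⟨K0, hK0, hK0'⟩ := exists_compact_escape I 0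
  obtain ⟨M, N, U, hU, h1, h2⟩ := local_conclusion I φ hg ((0 : ℂ) : OnePoint ℂ) OnePoint.infty
    (OnePoint.infty_ne_coe _) (by simp) (fun _ => 0) continuous_const rfl
    (fun x => and_comm) (by
      filter_upwards [eventually_infty_notMem hK0] with x hx z hz _ t ht h0
      have := hK0' z (hx z hz) t ht
      rw [h0] at this
      simp at this)
  have hT : ((↑) : ℂ → OnePoint ℂ) ⁻¹' U ∈ cocompact ℂ := by
    rw [← coclosedCompact_eq_cocompact]
    exact OnePoint.tendsto_coe_infty hU
  obtain ⟨K, hK, hKU⟩ := mem_cocompact.1 hT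
  refine ⟨M, N, insert 0 K, hK.insert 0, ?_, ?_⟩
  · intro z hz hf
    rw [mem_insert_iff, not_or] at hz
    simpa [Tourne] using h1 z (hKU hz.2) hz.1 hf
  · intro z z' hz hz' hne hf hf'
    rw [mem_insert_iff, not_or] at hz hz'
    exact h2 z z' (hKU hz.2) (hKU hz'.2) hz.1 hz'.1 hne hf hf'

lemma finite_conclusion {f : ℂ ≃ₜ ℂ} (I : HIsotopy f) (φ : OnePoint ℂ ≃ₜ 𝕊²)
    (hg : IsC1SphereDiffeo fun x => φ (OnePoint.map (⇑f) (φ.symm x))) (z0 : ℂ) (h0 : f z0 = z0) :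
    ∃ C : ℝ, ∃ V ∈ 𝓝 z0, ∀ z ∈ V, ∀ z' ∈ V, z ≠ z' → f z = z → f z' = z' →
      |Enlace I z z'| ≤ C := by
  have c0 : I.F 0 z0 = z0 := by rw [I.zero]; rfl
  have c1 : I.F 1 z0 = z0 := by rw [I.one]; exact h0
  obtain ⟨M, N, U, hU, h1, h2⟩ := local_conclusion I φ hg OnePoint.infty (z0 : OnePoint ℂ)
    (OnePoint.coe_ne_infty _) (by simp [h0]) (fun t => I.F t z0)
    (I.cont.comp (f := fun t : ℝ => (t, z0)) (by fun_prop)) (by simp only [c0, c1])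
    (fun x => by simp only [c0]) (by
      refine Eventually.of_forall fun x z hz hne t ht h => hne ?_
      rw [(I.F t).injective h]
      exact c0.symm)
  simp only [c0] at h1 h2
  refine ⟨max |M| |N|, ((↑) : ℂ → OnePoint ℂ) ⁻¹' U,
    OnePoint.continuous_coe.continuousAt hU, ?_⟩
  intro z hz z' hz' hne hf hf'
  by_cases e : z = z0
  · subst e
    rw [enlace_comm I hne]
    have := h1 z' hz' hne.symm hf'
    unfold Enlace
    rw [this]
    exact le_max_right _ _
  · by_cases e' : z' = z0
    · subst e'
      have := h1 z hz e hf
      unfold Enlace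
      rw [this]
      exact le_max_right _ _
    · rw [h2 z z' hz hz' e e' hne hf hf']
      exact le_max_left _ _

/-- Local boundedness at two distinct finite points. -/
lemma distinct_conclusion {f : ℂ ≃ₜ ℂ} (I : HIsotopy f) (x0 y0 : ℂ) (hne : x0 ≠ y0)
    (hx : f x0 = x0) (hy : f y0 = y0) :
    ∃ C : ℝ, ∃ V ∈ 𝓝 (x0, y0), ∀ z z', (z, z') ∈ V → z ≠ z' → f z = z → f z' = z' →
      |Enlace I z z'| ≤ C := by
  let S : Set (ℂ × ℂ) := {p | p.1 ≠ p.2 ∧ f p.1 = p.1 ∧ f p.2 = p.2}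
  have h := angVar_loop_eventually (S := S) (Q := fun p t => I.F t p.1 - I.F t p.2)
    (x := (x0, y0))
    (Continuous.continuousOn
      ((I.cont.comp (f := fun p : (ℂ × ℂ) × ℝ => (p.2, p.1.1)) (by fun_prop)).sub
        (I.cont.comp (f := fun p : (ℂ × ℂ) × ℝ => (p.2, p.1.2)) (by fun_prop))))
    (fun p hp t _ => sub_ne_zero.2 ((I.F t).injective.ne hp.1))
    (fun p hp => by
      change I.F 0 p.1 - I.F 0 p.2 = I.F 1 p.1 - I.F 1 p.2
      rw [I.zero, I.one, hp.2.1, hp.2.2]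
      rfl) ⟨hne, hx, hy⟩
  rw [eventually_nhdsWithin_iff] at h
  refine ⟨|Enlace I x0 y0|, _, h, ?_⟩
  intro z z' hV hzz hf hf'
  exact (congrArg abs (hV ⟨hzz, hf, hf'⟩)).le

/-- Local boundedness at a finite point and infinity. -/
lemma mixed_conclusion {f : ℂ ≃ₜ ℂ} (I : HIsotopy f) (N : ℝ) (K : Set ℂ) (hK : IsCompact K)
    (hN : ∀ z, z ∉ K → f z = z → Tourne I z = N) (y0 : ℂ) :
    ∃ V ∈ 𝓝 y0, ∃ K' : Set ℂ, IsCompact K' ∧ ∀ z ∈ V, ∀ z', z' ∉ K' → z ≠ z' →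
      f z = z → f z' = z' → |Enlace I z z'| ≤ |N| := by
  obtain ⟨R, hR⟩ := ((isCompact_Icc (a := (0 : ℝ)) (b := 1)).prod
    (isCompact_closedBall y0 1)).exists_bound_of_continuousOn I.cont.continuousOn
  obtain ⟨K1, hK1, hK1'⟩ := exists_compact_escape I (max R 0)
  refine ⟨closedBall y0 1, closedBall_mem_nhds _ one_pos, K ∪ K1, hK.union hK1, ?_⟩
  intro z hz z' hz' hne hf hf'
  rw [mem_union, not_or] at hz'
  have hnz : ∀ t ∈ Icc (0 : ℝ) 1, I.F t z' ≠ 0 := fun t ht h => by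
    have := hK1' z' hz'.2 t ht
    rw [h, norm_zero] at this
    exact absurd (le_max_right R 0) (not_le.2 this)
  have e : Enlace I z' z = Tourne I z' := by
    refine angVar_eq_of_div_slit (enlace_nz I hne.symm) ⟨Continuous.continuousOn
      (I.cont.comp (f := fun t : ℝ => (t, z')) (by fun_prop)), hnz⟩ ?_ ?_
    · intro t ht
      have h1 : ‖I.F t z‖ ≤ R := hR (t, z) ⟨ht, hz⟩
      have h2 := (le_max_left R 0).trans_lt (hK1' z' hz'.2 t ht)
      rw [sub_div, div_self (hnz t ht), sub_eq_add_neg]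
      refine Complex.mem_slitPlane_of_norm_lt_one ?_
      rw [norm_neg, norm_div, div_lt_one (norm_pos_iff.2 (hnz t ht))]
      exact h1.trans_lt h2
    · rw [I.zero, I.one, hf, hf']
      rfl
  rw [enlace_comm I hne, e, hN z' hz'.1 hf']

lemma locally_bounded {f : ℂ ≃ₜ ℂ} (I : HIsotopy f) (φ : OnePoint ℂ ≃ₜ 𝕊²)
    (hg : IsC1SphereDiffeo fun x => φ (OnePoint.map (⇑f) (φ.symm x)))
    (x y : OnePoint ℂ) :
    ∃ V ∈ 𝓝 (x, y), ∃ C : ℝ, ∀ z z' : ℂ, ((z : OnePoint ℂ), (z' : OnePoint ℂ)) ∈ V →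
      z ≠ z' → f z = z → f z' = z' → |Enlace I z z'| ≤ C := by
  obtain ⟨M, N, K, hK, hN, hM⟩ := infinity_conclusion I φ hg
  have nb : ∀ {z0 : ℂ} {V : Set ℂ}, V ∈ 𝓝 z0 →
      ((↑) : ℂ → OnePoint ℂ) '' V ∈ 𝓝 (z0 : OnePoint ℂ) := fun hV =>
    OnePoint.isOpenEmbedding_coe.isOpenMap.image_mem_nhds hV
  have inj : Function.Injective ((↑) : ℂ → OnePoint ℂ) := OnePoint.coe_injective
  have hopen : IsOpen {z : ℂ | f z ≠ z} := isOpen_ne_fun f.continuous continuous_id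
  induction x using OnePoint.rec with
  | infty =>
    induction y using OnePoint.rec with
    | infty =>
      refine ⟨_, prod_mem_nhds (eventually_infty_notMem hK) (eventually_infty_notMem hK), |M|, ?_⟩
      rintro z z' ⟨h1, h2⟩ hne hf hf'
      rw [hM z z' (h1 z rfl) (h2 z' rfl) hne hf hf']
    | coe y0 =>
      obtain ⟨V, hV, K', hK', h⟩ := mixed_conclusion I N K hK hN y0
      refine ⟨_, prod_mem_nhds (eventually_infty_notMem hK') (nb hV), |N|, ?_⟩
      rintro z z' ⟨h1, h2⟩ hne hf hf'
      rw [enlace_comm I hne]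
      exact h z' (inj.mem_set_image.1 h2) z (h1 z rfl) hne.symm hf' hf
  | coe x0 =>
    induction y using OnePoint.rec with
    | infty =>
      obtain ⟨V, hV, K', hK', h⟩ := mixed_conclusion I N K hK hN x0
      refine ⟨_, prod_mem_nhds (nb hV) (eventually_infty_notMem hK'), |N|, ?_⟩
      rintro z z' ⟨h1, h2⟩ hne hf hf'
      exact h z (inj.mem_set_image.1 h1) z' (h2 z' rfl) hne hf hf'
    | coe y0 =>
      by_cases hx : f x0 = x0
      swap
      · refine ⟨_, prod_mem_nhds (nb (hopen.mem_nhds hx)) univ_mem, 0, ?_⟩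
        rintro z z' ⟨h1, -⟩ hne hf hf'
        exact absurd hf (inj.mem_set_image.1 h1)
      by_cases hy : f y0 = y0
      swap
      · refine ⟨_, prod_mem_nhds univ_mem (nb (hopen.mem_nhds hy)), 0, ?_⟩
        rintro z z' ⟨-, h1⟩ hne hf hf'
        exact absurd hf' (inj.mem_set_image.1 h1)
      by_cases e : x0 = y0
      · subst e
        obtain ⟨C, V, hV, h⟩ := finite_conclusion I φ hg x0 hx
        refine ⟨_, prod_mem_nhds (nb hV) (nb hV), C, ?_⟩
        rintro z z' ⟨h1, h2⟩ hne hf hf'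
        exact h z (inj.mem_set_image.1 h1) z' (inj.mem_set_image.1 h2) hne hf hf'
      · obtain ⟨C, V, hV, h⟩ := distinct_conclusion I x0 y0 e hx hy
        obtain ⟨V1, hV1, V2, hV2, hV12⟩ := mem_nhds_prod_iff.1 hV
        refine ⟨_, prod_mem_nhds (nb hV1) (nb hV2), C, ?_⟩
        rintro z z' ⟨h1, h2⟩ hne hf hf'
        exact h z z' (hV12 ⟨inj.mem_set_image.1 h1, inj.mem_set_image.1 h2⟩) hne hf hf'

theorem stmt2_extendsC1_implies_P1_P2
    (f : ℂ ≃ₜ ℂ) (hor : Nonempty (HIsotopy f))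
    (hext : ExtendsToC1SphereDiffeo f) :
    ∀ I : HIsotopy f, P1 I ∧ P2 I := by
  intro I
  obtain ⟨φ, hg⟩ := hext
  constructor
  · have key : ∃ C : ℝ, ∀ z z' : ℂ, ((z : OnePoint ℂ), (z' : OnePoint ℂ)) ∈
        (univ : Set (OnePoint ℂ × OnePoint ℂ)) →
        z ≠ z' → f z = z → f z' = z' → |Enlace I z z'| ≤ C := by
      refine isCompact_univ.induction_on (p := fun s : Set (OnePoint ℂ × OnePoint ℂ) =>
        ∃ C : ℝ, ∀ z z' : ℂ, ((z : OnePoint ℂ), (z' : OnePoint ℂ)) ∈ s →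
        z ≠ z' → f z = z → f z' = z' → |Enlace I z z'| ≤ C) ?_ ?_ ?_ ?_
      · exact ⟨0, fun z z' h => absurd h (notMem_empty _)⟩
      · rintro s t hst ⟨C, hC⟩
        exact ⟨C, fun z z' h => hC z z' (hst h)⟩
      · rintro s t ⟨C, hC⟩ ⟨D, hD⟩
        refine ⟨max C D, fun z z' h hne hf hf' => ?_⟩
        rcases h with h | h
        · exact (hC z z' h hne hf hf').trans (le_max_left _ _)
        · exact (hD z z' h hne hf hf').trans (le_max_right _ _)
      · rintro ⟨x, y⟩ -
        obtain ⟨V, hV, h⟩ := locally_bounded I φ hg x y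
        exact ⟨V, mem_nhdsWithin_of_mem_nhds hV, h⟩
    obtain ⟨C, hC⟩ := key
    exact ⟨C, fun z hz z' hz' hne => hC z z' (mem_univ _) hne hz hz'⟩
  · obtain ⟨M, N, K, hK, hN, -⟩ := infinity_conclusion I φ hg
    exact ⟨K, hK, fun z hz z' hz' => (hN z hz.2 hz.1).trans (hN z' hz'.2 hz'.1).symm⟩

end
end

section
/- Let f be an orientation-preserving homeomorphism of ℝ² satisfying (P1) and (P2) and such that Fix(f) is not compact. Then for every finite Borel measure μ on ℝ² invariant under f and every point z' ∈ Fix(f), the rotation number ρ_{z'}(z) is defined for μ-almost every point z of Rec⁺(f) ∖ {z'}. -/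
open MeasureTheory Filter Topology Set Metric

noncomputable section

attribute [local instance] Classical.propDecidable

theorem exists_log_lift {X : Type*} [TopologicalSpace X] (H : unitInterval × X → ℂ)
    (hc : Continuous H) (h0 : ∀ p, H p ≠ 0) (e : X → ℂ) (he : Continuous e)
    (hH0 : ∀ x, H (0, x) = Complex.exp (e x)) :
    ∃ l : unitInterval × X → ℂ, Continuous l ∧ (∀ p, Complex.exp (l p) = H p) ∧
      ∀ x, l (0, x) = e x := by
  let H' : C(unitInterval × X, {z : ℂ // z ≠ 0}) := ⟨fun p => ⟨H p, h0 p⟩, by fun_prop⟩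
  let e' : C(X, ℂ) := ⟨e, he⟩
  have hh : ∀ a, H' (0, a) = (⟨_, (e' a).exp_ne_zero⟩ : {z : ℂ // z ≠ 0}) := by
    intro a; apply Subtype.ext; exact hH0 a
  refine ⟨Complex.isCoveringMap_exp.liftHomotopy H' e' hh, ?_, ?_, ?_⟩
  · exact ContinuousMap.continuous _
  · intro p
    have := congrFun (Complex.isCoveringMap_exp.liftHomotopy_lifts H' e' hh) p
    exact congrArg Subtype.val this
  · intro x
    exact Complex.isCoveringMap_exp.liftHomotopy_zero H' e' hh x

theorem exp_one_const {X : Type*} [TopologicalSpace X] [PreconnectedSpace X] (g : X → ℂ)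
    (hc : Continuous g) (h1 : ∀ x, Complex.exp (g x) = 1) (x y : X) : g x = g y := by
  have := Complex.isCoveringMap_exp.eq_of_comp_eq (g₁ := g) (g₂ := fun _ => g x) hc
    continuous_const (by funext z; apply Subtype.ext; simp [h1]) x rfl
  exact (congrFun this y).symm

/-- A nowhere vanishing continuous function on the plane has a logarithm. -/
theorem exists_log_plane (v : ℂ → ℂ) (hv : Continuous v) (h0 : ∀ x, v x ≠ 0) :
    ∃ a : ℂ → ℂ, Continuous a ∧ ∀ x, Complex.exp (a x) = v x := by
  obtain ⟨l, lc, le, -⟩ := exists_log_lift (X := ℂ) (fun p => v ((p.1 : ℝ) * p.2))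
    (by fun_prop) (fun p => h0 _) (fun _ => Complex.log (v 0)) continuous_const
    (by intro x; simp [Complex.exp_log (h0 0)])
  exact ⟨fun x => l (1, x), by fun_prop, fun x => by simp [le]⟩

/-- Homeomorphisms for which the ratio `(F x - F y)/(x - y)` has a symmetric logarithm. -/
def QH (F : ℂ ≃ₜ ℂ) : Prop := ∃ L : ℂ × ℂ → ℂ, ContinuousOn L {p | p.1 ≠ p.2} ∧
  (∀ x y, x ≠ y → L (x, y) = L (y, x)) ∧
  ∀ x y, x ≠ y → Complex.exp (L (x, y)) = (F x - F y) / (x - y)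

theorem QH.refl : QH (Homeomorph.refl ℂ) :=
  ⟨fun _ => 0, continuousOn_const, by simp, by
    intro x y h
    have : x - y ≠ 0 := sub_ne_zero.2 h
    simp [this]⟩

theorem QH.trans {F G : ℂ ≃ₜ ℂ} (hF : QH F) (hG : QH G) : QH (F.trans G) := by
  obtain ⟨L, Lc, Ls, Le⟩ := hF
  obtain ⟨M, Mc, Ms, Me⟩ := hG
  refine ⟨fun p => L p + M (F p.1, F p.2), ?_, ?_, ?_⟩
  · refine Lc.add (Mc.comp (by fun_prop) ?_)
    intro p hp
    exact fun h => hp (F.injective h)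
  · intro x y h
    have h2 : F x ≠ F y := fun h' => h (F.injective h')
    simp only
    rw [Ls x y h, Ms _ _ h2]
  · intro x y h
    have h2 : F x ≠ F y := fun h' => h (F.injective h')
    simp only [Homeomorph.trans_apply]
    rw [Complex.exp_add, Le x y h, Me _ _ h2]
    have : F x - F y ≠ 0 := sub_ne_zero.2 h2
    have : x - y ≠ 0 := sub_ne_zero.2 h
    field_simp

/-- No points of period two. -/
theorem no_period_two {F : ℂ ≃ₜ ℂ} (hQ : QH F) (hF : ∀ x, F x ≠ x) (x : ℂ) : F (F x) ≠ x := by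
  intro hx
  obtain ⟨L, Lc, Ls, Le⟩ := hQ
  obtain ⟨a, ac, ae⟩ := exists_log_plane (fun x => F x - x) (by fun_prop)
    (fun x => sub_ne_zero.2 (hF x))
  have key := exp_one_const (fun x => L (F x, x) - (a (F x) - a x)) ?_ ?_ x (F x)
  · simp only [hx] at key
    rw [Ls x (F x) (fun h => hF x h.symm)] at key
    have h2 : a (F x) = a x := by linear_combination -key/2
    have h3 := ae x
    have h4 := ae (F x)
    rw [h2, h3, hx] at h4
    apply hF x
    linear_combination h4/2
  · refine Continuous.sub (Lc.comp_continuous (by fun_prop) fun x => hF x) (by fun_prop)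
  · intro y
    rw [Complex.exp_sub, Complex.exp_sub, Le _ _ (hF y), ae, ae, div_self]
    have h1 := sub_ne_zero.2 (hF y)
    have h2 := sub_ne_zero.2 (hF (F y))
    exact div_ne_zero h2 h1

/-- Local push. -/
theorem local_push (a b : ℂ) (r : ℝ) (hb : dist b a < r) : ∃ φ : ℂ ≃ₜ ℂ, QH φ ∧ φ a = b ∧
    ∀ x, x ∉ ball a r → φ x = x := by
  have hr : 0 < r := lt_of_le_of_lt dist_nonneg hb
  let v : ℂ := (b - a) / r
  have hv : ‖v‖ < 1 := by
    simp only [v, norm_div, Complex.norm_real, Real.norm_eq_abs, abs_of_pos hr]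
    rw [div_lt_one hr, ← dist_eq_norm]; exact hb
  let c : ℂ → ℝ := fun x => max 0 (r - dist x a)
  have hc : ∀ x y, |c x - c y| ≤ dist x y := by
    intro x y
    have h1 : |c x - c y| ≤ |(r - dist x a) - (r - dist y a)| := by
      simpa using abs_max_sub_max_le_abs (r - dist x a) (r - dist y a) 0 |> (by
        simpa [c, max_comm] using ·)
    refine h1.trans ?_
    rw [show (r - dist x a) - (r - dist y a) = dist y a - dist x a by ring, dist_comm x y]
    exact abs_dist_sub_le y x a
  let φ : ℂ → ℂ := fun x => x + c x * v
  have hφ : ∀ x y, ‖(φ x - φ y) - (x - y)‖ ≤ ‖v‖ * ‖x - y‖ := by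
    intro x y
    have : (φ x - φ y) - (x - y) = ((c x - c y : ℝ) : ℂ) * v := by
      simp only [φ]; push_cast; ring
    rw [this, norm_mul, Complex.norm_real, mul_comm, ← dist_eq_norm x y]
    gcongr
    exact hc x y
  have happ : ApproximatesLinearOn φ ((ContinuousLinearEquiv.refl ℝ ℂ : ℂ ≃L[ℝ] ℂ) : ℂ →L[ℝ] ℂ)
      univ ‖v‖₊ := by
    intro x _ y _
    exact hφ x y
  have hcc : Subsingleton ℂ ∨ ‖v‖₊ <
      ‖((ContinuousLinearEquiv.refl ℝ ℂ).symm : ℂ →L[ℝ] ℂ)‖₊⁻¹ := by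
    right
    have : ‖((ContinuousLinearEquiv.refl ℝ ℂ).symm : ℂ →L[ℝ] ℂ)‖₊ = 1 := by
      have : ‖((ContinuousLinearEquiv.refl ℝ ℂ).symm : ℂ →L[ℝ] ℂ)‖ = 1 :=
        ContinuousLinearMap.norm_id
      exact NNReal.eq this
    rw [this, inv_one]
    exact hv
  let Φ := happ.toHomeomorph φ hcc
  have hΦ : ∀ x, Φ x = φ x := fun x => rfl
  refine ⟨Φ, ?_, ?_, ?_⟩
  · have hre : ∀ x y, x ≠ y → (Φ x - Φ y) / (x - y) ∈ Complex.slitPlane := by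
      intro x y h
      have h0 : x - y ≠ 0 := sub_ne_zero.2 h
      have h1 : ‖(Φ x - Φ y) / (x - y) - 1‖ < 1 := by
        rw [div_sub_one h0, norm_div, div_lt_one (norm_pos_iff.2 h0)]
        refine (hφ x y).trans_lt ?_
        have := norm_pos_iff.2 h0
        nlinarith
      apply Complex.mem_slitPlane_of_norm_lt_one (z := (Φ x - Φ y) / (x - y) - 1) h1 |> (by
        simpa using ·)
    refine ⟨fun p => Complex.log ((Φ p.1 - Φ p.2) / (p.1 - p.2)), ?_, ?_, ?_⟩
    · refine ContinuousOn.clog ?_ (fun p hp => hre _ _ hp)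
      refine ContinuousOn.div (by fun_prop) (by fun_prop) (fun p hp => sub_ne_zero.2 hp)
    · intro x y h
      simp only
      congr 1
      rw [← neg_sub (Φ y), ← neg_sub y x, neg_div_neg_eq]
    · intro x y h
      exact Complex.exp_log (Complex.slitPlane_ne_zero (hre x y h))
  · rw [hΦ]
    have : (r : ℂ) ≠ 0 := by exact_mod_cast hr.ne'
    simp only [φ, c, dist_self, sub_zero, max_eq_right hr.le, v]
    field_simp
    ring
  · intro x hx
    rw [hΦ]
    have : r - dist x a ≤ 0 := by
      simp at hx; linarith
    simp [φ, c, max_eq_left this]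

/-- Homogeneity of connected open sets. -/
theorem push_open (N : Set ℂ) (hN : IsOpen N) (hcN : IsPreconnected N) (a b : ℂ) (ha : a ∈ N)
    (hb : b ∈ N) : ∃ φ : ℂ ≃ₜ ℂ, QH φ ∧ φ a = b ∧ ∀ x, x ∉ N → φ x = x := by
  let R : ℂ → ℂ → Prop := fun u w => ∃ φ : ℂ ≃ₜ ℂ, QH φ ∧ φ u = w ∧ ∀ x, x ∉ N → φ x = x
  have hRt : ∀ u v w, R u v → R v w → R u w := by
    rintro u v w ⟨φ, h1, h2, h3⟩ ⟨ψ, k1, k2, k3⟩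
    refine ⟨φ.trans ψ, h1.trans k1, by simp [h2, k2], fun x hx => by simp [h3 x hx, k3 x hx]⟩
  have hloc : ∀ x ∈ N, ∃ r > 0, ball x r ⊆ N ∧ ∀ y ∈ ball x r, R x y ∧ R y x := by
    intro x hx
    obtain ⟨r, hr, hrN⟩ := Metric.isOpen_iff.1 hN x hx
    refine ⟨r / 2, by positivity, (ball_subset_ball (by linarith)).trans hrN, fun y hy => ?_⟩
    constructor
    · obtain ⟨φ, h1, h2, h3⟩ := local_push x y (r / 2) hy
      exact ⟨φ, h1, h2, fun w hw => h3 w fun h => hw (hrN (ball_subset_ball (by linarith) h))⟩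
    · obtain ⟨φ, h1, h2, h3⟩ := local_push y x (r / 2) (by rw [dist_comm]; exact hy)
      refine ⟨φ, h1, h2, fun w hw => h3 w fun h => hw (hrN ?_)⟩
      have h4 : dist y x < r / 2 := hy
      have h5 : dist w y < r / 2 := h
      have := dist_triangle w y x
      rw [mem_ball]; linarith
  by_contra hne
  have hne : ¬ R a b := hne
  let A : Set ℂ := {x | x ∈ N ∧ R a x}
  let B : Set ℂ := {x | x ∈ N ∧ ¬ R a x}
  have hA : IsOpen A := by
    rw [Metric.isOpen_iff]
    rintro x ⟨hx, hx2⟩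
    obtain ⟨r, hr, hs, h⟩ := hloc x hx
    exact ⟨r, hr, fun y hy => ⟨hs hy, hRt _ _ _ hx2 (h y hy).1⟩⟩
  have hB : IsOpen B := by
    rw [Metric.isOpen_iff]
    rintro x ⟨hx, hx2⟩
    obtain ⟨r, hr, hs, h⟩ := hloc x hx
    exact ⟨r, hr, fun y hy => ⟨hs hy, fun h' => hx2 (hRt _ _ _ h' (h y hy).2)⟩⟩
  obtain ⟨x, -, hx1, hx2⟩ := hcN A B hA hB (fun x hx => by
    by_cases h : R a x
    · exact Or.inl ⟨hx, h⟩
    · exact Or.inr ⟨hx, h⟩) ⟨a, ha, ha, Homeomorph.refl ℂ, QH.refl, rfl, fun _ _ => rfl⟩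
    ⟨b, hb, hb, hne⟩
  exact hx2.2 hx1.2

theorem thick_conn (K W : Set ℂ) (hK : IsCompact K) (hc : IsPreconnected K) (hW : IsOpen W)
    (h : K ⊆ W) : ∃ N, IsOpen N ∧ IsPreconnected N ∧ K ⊆ N ∧ N ⊆ W := by
  obtain ⟨δ, hδ, hs⟩ := hK.exists_thickening_subset_open hW h
  refine ⟨thickening δ K, isOpen_thickening, ?_, self_subset_thickening hδ K, hs⟩
  have : thickening δ K = (fun p : ℂ × ℂ => p.1 + p.2) '' (K ×ˢ ball 0 δ) := by
    ext x
    simp only [mem_thickening_iff, mem_image, mem_prod, Prod.exists, mem_ball]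
    constructor
    · rintro ⟨z, hz, hd⟩
      exact ⟨z, x - z, ⟨hz, by simpa [dist_eq_norm] using hd⟩, by ring⟩
    · rintro ⟨z, u, ⟨hz, hu⟩, rfl⟩
      exact ⟨z, hz, by simpa [dist_eq_norm] using hu⟩
  rw [this]
  exact (hc.prod (convex_ball (0 : ℂ) δ).isPreconnected).image _ (by fun_prop)

theorem sep_nhds (F : ℂ ≃ₜ ℂ) (K L : Set ℂ) (hK : IsCompact K) (hL : IsCompact L)
    (h : ∀ x ∈ L, F x ∉ K) : ∃ W W', IsOpen W ∧ IsOpen W' ∧ K ⊆ W ∧ L ⊆ W' ∧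
      ∀ x ∈ W', F x ∉ W := by
  have hd : Disjoint K (F '' L) := by
    rw [Set.disjoint_right]
    rintro _ ⟨x, hx, rfl⟩
    exact h x hx
  obtain ⟨A, B, hA, hB, hKA, hLB, hAB⟩ :=
    SeparatedNhds.of_isCompact_isCompact hK (hL.image F.continuous) hd
  refine ⟨A, F ⁻¹' B, hA, hB.preimage F.continuous, hKA, fun x hx => hLB ⟨x, hx, rfl⟩, ?_⟩
  intro x hx hx'
  exact Set.disjoint_left.1 hAB hx' hx

theorem closing {F : ℂ ≃ₜ ℂ} (hQ : QH F) (K : Set ℂ) (hK : IsCompact K)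
    (hc : IsPreconnected K) (hfree : ∀ x ∈ K, F x ∉ K) (hF : ∀ x, F x ≠ x) (y : ℂ) (hy : y ∈ K)
    (j : ℕ) (hj : 1 ≤ j) (hjy : (⇑F)^[j] y ∈ K) :
    ∃ G : ℂ ≃ₜ ℂ, QH G ∧ (∀ x, G x ≠ x) ∧ ∃ i, 2 ≤ i ∧ i ≤ j ∧ (⇑G)^[i] y = y := by
  classical
  have hex : ∃ i, 1 ≤ i ∧ (⇑F)^[i] y ∈ K := ⟨j, hj, hjy⟩
  obtain ⟨hi1, hiK⟩ := Nat.find_spec hex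
  have himin := fun l (hl : l < Nat.find hex) => Nat.find_min hex hl
  have hij : Nat.find hex ≤ j := Nat.find_min' hex ⟨hj, hjy⟩
  generalize Nat.find hex = i at *
  have hi2 : 2 ≤ i := by
    rcases Nat.lt_or_ge i 2 with h | h
    · have : i = 1 := by omega
      subst this
      exact absurd hiK (hfree y hy)
    · exact h
  obtain ⟨W, W', hW, hW', hKW, hKW', hWW⟩ := sep_nhds F K K hK hK hfree
  let S : Set ℂ := (fun l => (⇑F)^[l] y) '' (Set.Ico 1 i)
  have hS : IsClosed S := ((Set.finite_Ico 1 i).image _).isClosed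
  obtain ⟨N, hN, hcN, hKN, hNW⟩ := thick_conn K (W ∩ W' ∩ Sᶜ) hK hc
    ((hW.inter hW').inter hS.isOpen_compl) (by
      intro x hx
      refine ⟨⟨hKW hx, hKW' hx⟩, ?_⟩
      rintro ⟨l, ⟨hl1, hl2⟩, rfl⟩
      exact himin l hl2 ⟨hl1, hx⟩)
  obtain ⟨φ, hφ, hφa, hφx⟩ := push_open N hN hcN _ _ (hKN hiK) (hKN hy)
  have hφN : ∀ x, x ∈ N → φ x ∈ N := by
    intro x hx
    by_contra h
    have := hφx _ h
    rw [φ.injective this] at h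
    exact h hx
  refine ⟨F.trans φ, hQ.trans hφ, ?_, i, hi2, hij, ?_⟩
  · intro x hx
    simp only [Homeomorph.trans_apply] at hx
    by_cases h : F x ∈ N
    · have h2 := hφN _ h
      rw [hx] at h2
      exact hWW x (hNW h2).1.2 (hNW h).1.1
    · rw [hφx _ h] at hx
      exact hF x hx
  · have : ∀ l, l < i → (⇑(F.trans φ))^[l] y = (⇑F)^[l] y := by
      intro l
      induction l with
      | zero => intro _; rfl
      | succ l ih =>
        intro hl
        rw [Function.iterate_succ_apply', ih (by omega), Function.iterate_succ_apply']
        simp only [Homeomorph.trans_apply]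
        apply hφx
        intro h
        apply (hNW h).2
        exact ⟨l + 1, ⟨by omega, hl⟩, Function.iterate_succ_apply' _ _ _⟩
    obtain ⟨l, rfl⟩ : ∃ l, i = l + 1 := ⟨i - 1, by omega⟩
    rw [Function.iterate_succ_apply', this l (by omega)]
    simp only [Homeomorph.trans_apply]
    rw [← Function.iterate_succ_apply' F]
    exact hφa

theorem max_disc (F : ℂ ≃ₜ ℂ) (hF : ∀ x, F x ≠ x) (x : ℂ) : ∃ r > 0, ∃ p,
    p ∈ closedBall x r ∧ F p ∈ closedBall x r ∧
    ∀ a ∈ closedBall x r, F a ∈ closedBall x r → dist a x = r ∧ dist (F a) x = r := by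
  let S : Set ℝ := {r | 0 ≤ r ∧ ∀ a ∈ closedBall x r, F a ∉ closedBall x r}
  -- small closed balls are free
  have hgrow : ∀ r ∈ S, ∃ δ > 0, r + δ ∈ S := by
    rintro r ⟨hr, h⟩
    obtain ⟨W, W', hW, hW', hKW, hKW', hWW⟩ := sep_nhds F (closedBall x r) (closedBall x r)
      (isCompact_closedBall x r) (isCompact_closedBall x r) h
    obtain ⟨δ, hδ, hs⟩ := (isCompact_closedBall x r).exists_cthickening_subset_open
      (hW.inter hW') (fun y hy => ⟨hKW hy, hKW' hy⟩)
    rw [cthickening_closedBall hδ.le hr] at hs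
    refine ⟨δ, hδ, by positivity, fun a ha hb => ?_⟩
    rw [add_comm] at ha hb
    exact hWW a (hs ha).2 (hs hb).1
  have h0 : (0 : ℝ) ∈ S := by
    refine ⟨le_rfl, fun a ha hb => ?_⟩
    simp only [closedBall_zero, mem_singleton_iff] at ha hb
    rw [ha] at hb
    exact hF x hb
  have hbdd : BddAbove S := by
    refine ⟨dist (F x) x, fun r hr => ?_⟩
    by_contra h
    push Not at h
    exact hr.2 x (mem_closedBall_self hr.1) h.le
  set r := sSup S with hrdef
  have hrS : r ∉ S := by
    intro h
    obtain ⟨δ, hδ, hS⟩ := hgrow r h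
    have := le_csSup hbdd hS
    linarith
  have hr0 : 0 < r := by
    obtain ⟨δ, hδ, hS⟩ := hgrow 0 h0
    have := le_csSup hbdd hS
    linarith
  have hlt : ∀ a ∈ ball x r, F a ∉ ball x r := by
    intro a ha hb
    rw [mem_ball] at ha hb
    obtain ⟨s, hs, hs2⟩ := exists_lt_of_lt_csSup ⟨0, h0⟩ (max_lt ha hb)
    exact hs.2 a (by rw [mem_closedBall]; exact ((le_max_left _ _).trans_lt hs2).le)
      (by rw [mem_closedBall]; exact ((le_max_right _ _).trans_lt hs2).le)
  have hcl : closure (ball x r) = closedBall x r := closure_ball x hr0.ne'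
  have h1 : ∀ a ∈ ball x r, F a ∉ closedBall x r := by
    have : Disjoint (F '' ball x r) (ball x r) := by
      rw [Set.disjoint_left]
      rintro _ ⟨a, ha, rfl⟩
      exact hlt a ha
    have := this.closure_right (F.isOpenMap _ isOpen_ball)
    rw [hcl, Set.disjoint_left] at this
    exact fun a ha => this ⟨a, ha, rfl⟩
  have h2 : ∀ a ∈ closedBall x r, F a ∉ ball x r := by
    have : Disjoint (ball x r) (F ⁻¹' ball x r) := by
      rw [Set.disjoint_left]
      intro a ha
      exact hlt a ha
    have := this.closure_left (isOpen_ball.preimage F.continuous)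
    rw [hcl, Set.disjoint_left] at this
    exact fun a ha => this ha
  have hex : ∃ p ∈ closedBall x r, F p ∈ closedBall x r := by
    by_contra h
    push Not at h
    exact hrS ⟨hr0.le, h⟩
  obtain ⟨p, hp, hp2⟩ := hex
  refine ⟨r, hr0, p, hp, hp2, fun a ha hb => ⟨?_, ?_⟩⟩
  · by_contra h
    exact h1 a (lt_of_le_of_ne ha h) hb
  · by_contra h
    exact h2 a ha (lt_of_le_of_ne hb h)

theorem seg_sphere (x s : ℂ) (r : ℝ) (hr : 0 < r) (hs : s ∈ closedBall x r) (a : ℂ)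
    (ha : a ∈ segment ℝ x s) (har : dist a x = r) : a = s := by
  obtain ⟨t, ⟨ht0, ht1⟩, rfl⟩ := (segment_eq_image_lineMap ℝ x s).subset ha
  rw [dist_lineMap_left, Real.norm_of_nonneg ht0] at har
  rw [mem_closedBall, dist_comm] at hs
  have : t = 1 := by
    by_contra h
    have : t < 1 := lt_of_le_of_ne ht1 h
    nlinarith [dist_nonneg (x := x) (y := s)]
  simp [this]

theorem brouwer (m : ℕ) : 1 ≤ m → ∀ F : ℂ ≃ₜ ℂ, QH F → (∀ x, F x ≠ x) →
    ∀ x, (⇑F)^[m] x ≠ x := by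
  induction m using Nat.strong_induction_on with
  | _ m ih =>
  intro hm F hQ hF x hx
  rcases Nat.lt_or_ge m 3 with h3 | h3
  · interval_cases m
    · exact hF x hx
    · exact no_period_two hQ hF x hx
  -- closing lemma consequence
  have R1 : ∀ K : Set ℂ, IsCompact K → IsPreconnected K → (∀ x ∈ K, F x ∉ K) →
      ∀ y ∈ K, ∀ j, 1 ≤ j → j < m → (⇑F)^[j] y ∉ K := by
    intro K hK hc hfree y hy j hj hjm hjy
    obtain ⟨G, hG, hGf, i, hi, hij, hiy⟩ := closing hQ K hK hc hfree hF y hy j hj hjy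
    exact ih i (by omega) (by omega) G hG hGf y hiy
  obtain ⟨r, hr, p, hp, hFp, hfree⟩ := max_disc F hF x
  have hxr : x ∈ closedBall x r := mem_closedBall_self hr.le
  have hsegB : ∀ s ∈ closedBall x r, segment ℝ x s ⊆ closedBall x r := fun s hs =>
    (convex_closedBall x r).segment_subset hxr hs
  have segc : ∀ s : ℂ, IsCompact (segment ℝ x s) := by
    intro s
    rw [segment_eq_image_lineMap]
    exact isCompact_Icc.image (by fun_prop)
  have segp : ∀ s : ℂ, IsPreconnected (segment ℝ x s) := fun s =>
    (convex_segment x s).isPreconnected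
  have segfree : ∀ s ∈ closedBall x r, ∀ a ∈ segment ℝ x s, F a ∉ segment ℝ x s := by
    intro s hs a ha hFa
    obtain ⟨e1, e2⟩ := hfree a (hsegB s hs ha) (hsegB s hs hFa)
    have := seg_sphere x s r hr hs a ha e1
    have := seg_sphere x s r hr hs _ hFa e2
    exact hF a (by simp_all)
  have F2 : ∀ y ∈ segment ℝ x p, F (F y) ∉ segment ℝ x (F p) := by
    intro y hy hy2
    have hyB := hsegB p hp hy
    have hy2B := hsegB _ hFp hy2
    have sub1 : segment ℝ x y ⊆ segment ℝ x p :=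
      (convex_segment x p).segment_subset (left_mem_segment ℝ x p) hy
    have sub2 : segment ℝ x (F (F y)) ⊆ segment ℝ x (F p) :=
      (convex_segment x (F p)).segment_subset (left_mem_segment ℝ x _) hy2
    refine R1 (segment ℝ x y ∪ segment ℝ x (F (F y))) ((segc _).union (segc _))
      ((segp _).union x (left_mem_segment ℝ x _) (left_mem_segment ℝ x _) (segp _)) ?_ y
      (Or.inl (right_mem_segment ℝ x y)) 2 (by omega) (by omega)
      (Or.inr (right_mem_segment ℝ x _))
    have hsub : ∀ a ∈ segment ℝ x y ∪ segment ℝ x (F (F y)), a ∈ closedBall x r := by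
      rintro a (ha | ha)
      · exact hsegB _ hyB ha
      · exact hsegB _ hy2B ha
    have hsp : ∀ a ∈ segment ℝ x y ∪ segment ℝ x (F (F y)), dist a x = r →
        (a = y ∧ y = p) ∨ (a = F (F y) ∧ F (F y) = F p) := by
      rintro a (ha | ha) h
      · have e := seg_sphere x y r hr hyB a ha h
        have e2 := seg_sphere x p r hr hp a (sub1 ha) h
        exact Or.inl ⟨e, e ▸ e2⟩
      · have e := seg_sphere x _ r hr hy2B a ha h
        have e2 := seg_sphere x _ r hr hFp a (sub2 ha) h
        exact Or.inr ⟨e, e ▸ e2⟩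
    intro a ha hFa
    obtain ⟨e1, e2⟩ := hfree a (hsub a ha) (hsub _ hFa)
    have hno : ¬ (y = p ∧ F (F y) = F p) := by
      rintro ⟨rfl, h⟩
      exact hF _ h
    rcases hsp a ha e1 with ⟨u1, u2⟩ | ⟨u1, u2⟩ <;> rcases hsp _ hFa e2 with ⟨v1, v2⟩ | ⟨v1, v2⟩
    · exact hF a (v1.trans u1.symm)
    · exact hno ⟨u2, v2⟩
    · exact hno ⟨v2, u2⟩
    · exact hF a (v1.trans u1.symm)
  -- the two compact sets
  let K1 : Set ℂ := segment ℝ x (F p)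
  let K2 : Set ℂ := F '' segment ℝ x p
  have hK1 : IsCompact K1 := segc _
  have hK2 : IsCompact K2 := (segc _).image F.continuous
  have hc1 : IsPreconnected K1 := segp _
  have hc2 : IsPreconnected K2 := (segp _).image _ F.continuous.continuousOn
  have f11 : ∀ a ∈ K1, F a ∉ K1 := segfree _ hFp
  have f22 : ∀ a ∈ K2, F a ∉ K2 := by
    rintro _ ⟨a, ha, rfl⟩ ⟨b, hb, hab⟩
    rw [F.injective hab] at hb
    exact segfree p hp a ha hb
  have f21 : ∀ a ∈ K2, F a ∉ K1 := by
    rintro _ ⟨a, ha, rfl⟩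
    exact F2 a ha
  let S : Set ℂ := (fun l => (⇑F)^[l] x) '' (Set.Ico 2 m)
  have hS : IsClosed S := ((Set.finite_Ico 2 m).image _).isClosed
  have hS1 : K1 ⊆ Sᶜ := by
    rintro a ha ⟨l, ⟨hl, hl2⟩, rfl⟩
    exact R1 K1 hK1 hc1 f11 x (left_mem_segment ℝ x _) l (by omega) hl2 ha
  have hS2 : K2 ⊆ Sᶜ := by
    rintro _ ⟨a, ha, rfl⟩ ⟨l, ⟨hl, hl2⟩, hla⟩
    obtain ⟨l, rfl⟩ : ∃ k, l = k + 1 := ⟨l - 1, by omega⟩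
    simp only [Function.iterate_succ_apply'] at hla
    rw [← F.injective hla] at ha
    exact R1 _ (segc p) (segp p) (segfree p hp) x (left_mem_segment ℝ x _) l (by omega)
      (by omega) ha
  obtain ⟨A, A', hA, hA', kA, kA', hAA⟩ := sep_nhds F K1 K1 hK1 hK1 f11
  obtain ⟨B, B', hB, hB', kB, kB', hBB⟩ := sep_nhds F K2 K2 hK2 hK2 f22
  obtain ⟨C, C', hC, hC', kC, kC', hCC⟩ := sep_nhds F K1 K2 hK1 hK2 f21
  obtain ⟨N1, oN1, cN1, kN1, sN1⟩ := thick_conn K1 (A ∩ A' ∩ C ∩ Sᶜ) hK1 hc1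
    (((hA.inter hA').inter hC).inter hS.isOpen_compl)
    (fun a ha => ⟨⟨⟨kA ha, kA' ha⟩, kC ha⟩, hS1 ha⟩)
  obtain ⟨N2, oN2, cN2, kN2, sN2⟩ := thick_conn K2 (B ∩ B' ∩ C' ∩ Sᶜ) hK2 hc2
    (((hB.inter hB').inter hC').inter hS.isOpen_compl)
    (fun a ha => ⟨⟨⟨kB ha, kB' ha⟩, kC' ha⟩, hS2 ha⟩)
  obtain ⟨φ, hφ, hφa, hφx⟩ := push_open N1 oN1 cN1 x (F p) (kN1 (left_mem_segment ℝ x _))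
    (kN1 (right_mem_segment ℝ x _))
  obtain ⟨ψ, hψ, hψa, hψx⟩ := push_open N2 oN2 cN2 (F p) (F x)
    (kN2 ⟨p, right_mem_segment ℝ x _, rfl⟩) (kN2 ⟨x, left_mem_segment ℝ x _, rfl⟩)
  have n11 : ∀ a ∈ N1, F a ∉ N1 := fun a ha hb => hAA a (sN1 ha).1.1.2 (sN1 hb).1.1.1
  have n22 : ∀ a ∈ N2, F a ∉ N2 := fun a ha hb => hBB a (sN2 ha).1.1.2 (sN2 hb).1.1.1
  have n21 : ∀ a ∈ N2, F a ∉ N1 := fun a ha hb => hCC a (sN2 ha).1.2 (sN1 hb).1.2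
  have hφN : ∀ x, x ∈ N1 → φ x ∈ N1 := by
    intro x hx
    by_contra h
    have := hφx _ h
    rw [φ.injective this] at h
    exact h hx
  have hψN : ∀ x, x ∈ N2 → ψ x ∈ N2 := by
    intro x hx
    by_contra h
    have := hψx _ h
    rw [ψ.injective this] at h
    exact h hx
  let G := (F.trans φ).trans ψ
  have hGapp : ∀ w, G w = ψ (φ (F w)) := fun w => rfl
  have hG : QH G := (hQ.trans hφ).trans hψ
  have hGf : ∀ w, G w ≠ w := by
    intro w hw
    rw [hGapp] at hw
    by_cases h1 : F w ∈ N1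
    · have h2 := hφN _ h1
      have hw1 : w ∉ N1 := fun h => n11 w h h1
      have hw2 : w ∉ N2 := fun h => n21 w h h1
      by_cases h3 : φ (F w) ∈ N2
      · exact hw2 (hw ▸ hψN _ h3)
      · rw [hψx _ h3] at hw
        exact hw1 (hw ▸ h2)
    · rw [hφx _ h1] at hw
      by_cases h3 : F w ∈ N2
      · exact n22 w (hw ▸ hψN _ h3) h3
      · rw [hψx _ h3] at hw
        exact hF w hw
  have horb : ∀ l, l < m - 1 → (⇑G)^[l] (F x) = (⇑F)^[l] (F x) := by
    intro l
    induction l with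
    | zero => intro _; rfl
    | succ l ihl =>
      intro hl
      rw [Function.iterate_succ_apply', ihl (by omega), Function.iterate_succ_apply', hGapp]
      have hmem : F ((⇑F)^[l] (F x)) ∈ S := by
        refine ⟨l + 2, ⟨by omega, by omega⟩, ?_⟩
        simp only
        rw [Function.iterate_succ_apply', Function.iterate_succ_apply,]
      rw [hφx _ fun h => (sN1 h).2 hmem, hψx _ fun h => (sN2 h).2 hmem]
  obtain ⟨k, rfl⟩ : ∃ k, m = k + 2 := ⟨m - 2, by omega⟩
  refine ih (k + 1) (by omega) (by omega) G hG hGf (F x) ?_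
  rw [Function.iterate_succ_apply', horb k (by omega), hGapp]
  have : F ((⇑F)^[k] (F x)) = x := by
    rw [← Function.iterate_succ_apply' F, ← Function.iterate_succ_apply F]
    exact hx
  rw [this, hφa, hψa]

/-- Franks' lemma, in terms of an equivalence relation with homogeneous classes. -/
theorem franks {F : ℂ ≃ₜ ℂ} (hQ : QH F) (r : ℂ → ℂ → Prop) (hr : Equivalence r)
    (hpush : ∀ u v, r u v → ∃ φ : ℂ ≃ₜ ℂ, QH φ ∧ φ u = v ∧ (∀ x, r (φ x) x) ∧
      ∀ x, ¬ r x u → φ x = x)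
    (hfree : ∀ x, ¬ r (F x) x) (m : ℕ) (hm : 1 ≤ m) (u : ℕ → ℂ)
    (hu : ∀ i < m, r (F (u i)) (u (i + 1))) (hum : r (u m) (u 0)) : False := by
  induction m using Nat.strong_induction_on generalizing u with
  | _ m ih =>
  by_cases hdist : ∃ i j, i < j ∧ j ≤ m ∧ j - i < m ∧ r (u i) (u j)
  · obtain ⟨i, j, hij, hjm, hlt, hr'⟩ := hdist
    refine ih (j - i) hlt (by omega) (fun l => u (i + l)) (fun l hl => ?_) ?_
    · exact hu (i + l) (by omega)
    · simp only [add_zero]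
      rw [show i + (j - i) = j by omega]
      exact hr.symm hr'
  · push Not at hdist
    have key : ∀ l ≤ m, ∃ ψ : ℂ ≃ₜ ℂ, QH ψ ∧ (∀ x, r (ψ x) x) ∧
        ∀ i < l, ψ (F (u i)) = if i + 1 = m then u 0 else u (i + 1) := by
      intro l
      induction l with
      | zero =>
        intro _
        exact ⟨Homeomorph.refl ℂ, QH.refl, fun x => hr.refl x, by simp⟩
      | succ l ihl =>
        intro hl
        obtain ⟨ψ, hψ, hψr, hψu⟩ := ihl (by omega)
        have hT : r (u (l + 1)) (if l + 1 = m then u 0 else u (l + 1)) := by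
          split_ifs with h
          · rw [h]; exact hum
          · exact hr.refl _
        have h1 : r (ψ (F (u l))) (if l + 1 = m then u 0 else u (l + 1)) :=
          hr.trans (hψr _) (hr.trans (hu l (by omega)) hT)
        obtain ⟨φ, hφ, hφa, hφr, hφx⟩ := hpush _ _ h1
        refine ⟨ψ.trans φ, hψ.trans hφ, fun x => hr.trans (hφr _) (hψr _), fun i hi => ?_⟩
        simp only [Homeomorph.trans_apply]
        rcases Nat.lt_succ_iff_lt_or_eq.1 hi with h | rfl
        · rw [hψu i h]
          apply hφx
          rw [if_neg (by omega)]
          intro h2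
          refine hdist (i + 1) (l + 1) (by omega) (by omega) (by omega) ?_
          exact hr.trans h2 (hr.trans h1 (hr.symm hT))
        · exact hφa
    obtain ⟨ψ, hψ, hψr, hψu⟩ := key m le_rfl
    refine brouwer m hm (F.trans ψ) (hQ.trans hψ) ?_ (u 0) ?_
    · intro x hx
      simp only [Homeomorph.trans_apply] at hx
      have := hψr (F x)
      rw [hx] at this
      exact hfree x (hr.symm this)
    · have : ∀ l, l < m → (⇑(F.trans ψ))^[l] (u 0) = u l := by
        intro l
        induction l with
        | zero => intro _; rfl
        | succ l ihl =>
          intro hl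
          rw [Function.iterate_succ_apply', ihl (by omega)]
          simp only [Homeomorph.trans_apply]
          rw [hψu l (by omega), if_neg (by omega)]
      obtain ⟨k, rfl⟩ : ∃ k, m = k + 1 := ⟨m - 1, by omega⟩
      rw [Function.iterate_succ_apply', this k (by omega)]
      simp only [Homeomorph.trans_apply]
      rw [hψu k (by omega), if_pos rfl]

theorem angVar_eq (γ : ℝ → ℂ) (θ : ℝ → ℝ) (hθ : ContinuousOn θ (Set.Icc 0 1))
    (h0 : ∀ t ∈ Set.Icc (0 : ℝ) 1, γ t ≠ 0)
    (h : ∀ t ∈ Set.Icc (0 : ℝ) 1, γ t = (‖γ t‖ : ℂ) * Complex.exp ((θ t : ℂ) * Complex.I)) :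
    angVar γ = (θ 1 - θ 0) / (2 * Real.pi) := by
  have hex : ∃ θ : ℝ → ℝ, ContinuousOn θ (Set.Icc 0 1) ∧
      ∀ t ∈ Set.Icc (0 : ℝ) 1, γ t = (‖γ t‖ : ℂ) * Complex.exp ((θ t : ℂ) * Complex.I) :=
    ⟨θ, hθ, h⟩
  rw [angVar, dif_pos hex]
  obtain ⟨k1, k2⟩ := hex.choose_spec
  generalize hex.choose = η at *
  have key := exp_one_const (X := Set.Icc (0 : ℝ) 1)
    (fun t => ((η t : ℂ) - (θ t : ℂ)) * Complex.I) ?_ ?_ ⟨0, by simp⟩ ⟨1, by simp⟩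
  · simp only at key
    have := mul_right_cancel₀ Complex.I_ne_zero key
    have h2 : η 0 - θ 0 = η 1 - θ 1 := by exact_mod_cast this
    congr 1
    linarith
  · have c1 : Continuous fun t : Set.Icc (0 : ℝ) 1 => η t := continuousOn_iff_continuous_domRestrict.1 k1
    have c2 : Continuous fun t : Set.Icc (0 : ℝ) 1 => θ t := continuousOn_iff_continuous_domRestrict.1 hθ
    exact ((Complex.continuous_ofReal.comp c1).sub (Complex.continuous_ofReal.comp c2)).mul
      continuous_const
  · rintro ⟨t, ht⟩
    have e1 := k2 t ht
    rw [h t ht] at e1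
    have hn : (‖γ t‖ : ℂ) ≠ 0 := by
      simpa using h0 t ht
    have e2 : ‖(‖γ t‖ : ℂ) * Complex.exp ((θ t : ℂ) * Complex.I)‖ = ‖γ t‖ := by
      simp [Complex.norm_exp_ofReal_mul_I]
    rw [e2] at e1
    have e3 := mul_left_cancel₀ hn e1
    simp only
    rw [sub_mul, Complex.exp_sub, ← e3, div_self (Complex.exp_ne_zero _)]

/-- The lift of `f` to the universal covering of the complement of a fixed point. -/
theorem lift_exists (f : ℂ ≃ₜ ℂ) (I : HIsotopy f) (z' : ℂ) (hz' : f z' = z') :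
    ∃ F : ℂ ≃ₜ ℂ, QH F ∧ (∀ w, Complex.exp (F w) = f (z' + Complex.exp w) - z') ∧
      (∀ w, F (w + 2 * Real.pi * Complex.I) = F w + 2 * Real.pi * Complex.I) ∧
      ∀ w, Enlace I (z' + Complex.exp w) z' = (F w - w).im / (2 * Real.pi) := by
  have hF0 : ∀ x, I.F 0 x = x := by intro x; rw [I.zero]; rfl
  have hF0s : ∀ x, (I.F 0).symm x = x := by intro x; rw [I.zero]; rfl
  have hF1 : ∀ x, I.F 1 x = f x := by intro x; rw [I.one]
  have cF : ∀ {X : Type} [TopologicalSpace X] (a : X → ℝ) (b : X → ℂ), Continuous a →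
      Continuous b → Continuous fun x => I.F (a x) (b x) := fun a b ha hb =>
    I.cont.comp (ha.prodMk hb)
  have cFs : ∀ {X : Type} [TopologicalSpace X] (a : X → ℝ) (b : X → ℂ), Continuous a →
      Continuous b → Continuous fun x => (I.F (a x)).symm (b x) := fun a b ha hb =>
    I.cont_symm.comp (ha.prodMk hb)
  obtain ⟨l, lc, le, l0⟩ := exists_log_lift (X := ℂ)
    (fun p => I.F p.1 (z' + Complex.exp p.2) - I.F p.1 z')
    (by
      refine Continuous.sub (cF _ _ (by fun_prop) (by fun_prop)) (cF _ _ (by fun_prop)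
        (by fun_prop)))
    (by
      intro p h
      have := (I.F p.1).injective (sub_eq_zero.1 h)
      simp [Complex.exp_ne_zero] at this)
    id continuous_id (by intro x; simp [hF0])
  obtain ⟨m, mc, me, m0⟩ := exists_log_lift (X := ℂ)
    (fun p => (I.F p.1).symm (Complex.exp p.2 + I.F p.1 z') - z')
    (by
      refine Continuous.sub (cFs _ _ (by fun_prop) (Continuous.add (by fun_prop)
        (cF _ _ (by fun_prop) (by fun_prop)))) (by fun_prop))
    (by
      intro p h
      have h1 := sub_eq_zero.1 h
      have := congrArg (I.F p.1) h1
      simp [Complex.exp_ne_zero] at this)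
    id continuous_id (by intro x; simp [hF0, hF0s])
  simp only [id] at l0 m0
  have hml : ∀ t w, m (t, l (t, w)) = w := by
    intro t w
    have := exp_one_const (fun t : unitInterval => m (t, l (t, w)) - w) (by fun_prop)
      (by
        intro t
        rw [Complex.exp_sub, me]
        simp only
        rw [le]
        simp [Complex.exp_ne_zero]) 0 t
    simp only [l0, m0, sub_self] at this
    exact (sub_eq_zero.1 this.symm)
  have hlm : ∀ t w, l (t, m (t, w)) = w := by
    intro t w
    have := exp_one_const (fun t : unitInterval => l (t, m (t, w)) - w) (by fun_prop)
      (by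
        intro t
        rw [Complex.exp_sub, le]
        simp only
        rw [me]
        simp [Complex.exp_ne_zero]) 0 t
    simp only [l0, m0, sub_self] at this
    exact (sub_eq_zero.1 this.symm)
  let F : ℂ ≃ₜ ℂ :=
    { toFun := fun w => l (1, w)
      invFun := fun w => m (1, w)
      left_inv := fun w => hml 1 w
      right_inv := fun w => hlm 1 w
      continuous_toFun := by fun_prop
      continuous_invFun := by fun_prop }
  have hFl : ∀ w, F w = l (1, w) := fun w => rfl
  refine ⟨F, ?_, ?_, ?_, ?_⟩
  · obtain ⟨q, qc, qe, q0⟩ := exists_log_lift (X := {p : ℂ × ℂ // p.1 ≠ p.2})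
      (fun p => (l (p.1, p.2.1.1) - l (p.1, p.2.1.2)) / (p.2.1.1 - p.2.1.2))
      (Continuous.div (by fun_prop) (by fun_prop) (fun p => sub_ne_zero.2 p.2.2))
      (by
        intro p
        refine div_ne_zero (sub_ne_zero.2 fun h => p.2.2 ?_) (sub_ne_zero.2 p.2.2)
        rw [← hml p.1 p.2.1.1, h, hml])
      (fun _ => 0) continuous_const
      (by
        intro p
        simp only [l0]
        rw [div_self (sub_ne_zero.2 p.2)]; simp)
    classical
    refine ⟨fun p => if h : p.1 ≠ p.2 then q (1, ⟨p, h⟩) else 0, ?_, ?_, ?_⟩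
    · rw [continuousOn_iff_continuous_domRestrict]
      have : Set.domRestrict {p : ℂ × ℂ | p.1 ≠ p.2}
          (fun p => if h : p.1 ≠ p.2 then q (1, ⟨p, h⟩) else 0) = fun p => q (1, p) := by
        funext p
        have hp : p.1.1 ≠ p.1.2 := p.2
        exact dif_pos hp
      rw [this]
      fun_prop
    · intro x y h
      simp only [dif_pos h, dif_pos h.symm]
      have := exp_one_const (fun t : unitInterval => q (t, ⟨(x, y), h⟩) - q (t, ⟨(y, x), h.symm⟩))
        (by fun_prop)
        (by
          intro t
          rw [Complex.exp_sub, qe, qe]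
          simp only
          rw [← neg_sub (l (t, y)), ← neg_sub y x, neg_div_neg_eq, div_self]
          refine div_ne_zero (sub_ne_zero.2 fun h' => h ?_) (sub_ne_zero.2 h.symm)
          rw [← hml t x, ← h', hml]) 0 1
      simp only [q0, sub_self] at this
      exact sub_eq_zero.1 this.symm
    · intro x y h
      simp only [dif_pos h]
      rw [qe]
      rfl
  · intro w
    rw [hFl, le]
    simp [hF1, hz']
  · intro w
    have := exp_one_const (fun t : unitInterval => l (t, w + 2 * Real.pi * Complex.I) - l (t, w)
        - 2 * Real.pi * Complex.I) (by fun_prop)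
      (by
        intro t
        rw [Complex.exp_sub, Complex.exp_sub, le, le]
        simp only [Complex.exp_add, Complex.exp_two_pi_mul_I, mul_one, div_one]
        rw [← le (t, w), div_self (Complex.exp_ne_zero _)]) 0 1
    simp only [l0] at this
    rw [hFl, hFl]
    linear_combination -this
  · intro w
    have hle : ∀ t (ht : t ∈ Set.Icc (0 : ℝ) 1), I.F t (z' + Complex.exp w) - I.F t z' =
        Complex.exp (l (Set.projIcc 0 1 zero_le_one t, w)) := by
      intro t ht
      rw [le, Set.projIcc_of_mem _ ht]
    rw [Enlace, angVar_eq _ (fun t => (l (Set.projIcc 0 1 zero_le_one t, w)).im)]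
    · rw [hFl, Complex.sub_im]
      congr 2
      · simp
      · simp only [Set.projIcc_left]
        rw [show (⟨0, _⟩ : Set.Icc (0 : ℝ) 1) = (0 : unitInterval) from rfl, l0]
    · refine Continuous.continuousOn ?_
      have : Continuous fun t : ℝ => Set.projIcc (0 : ℝ) 1 zero_le_one t := continuous_projIcc
      fun_prop
    · intro t ht
      rw [hle t ht]
      exact Complex.exp_ne_zero _
    · intro t ht
      rw [hle t ht]
      generalize l (Set.projIcc 0 1 zero_le_one t, w) = c
      rw [Complex.norm_exp, Complex.ofReal_exp, ← Complex.exp_add, Complex.re_add_im]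

/-- Maximal functions of Birkhoff sums. -/
def maxB {α : Type*} (T : α → α) (h : α → ℝ) : ℕ → α → ℝ
  | 0 => fun _ => 0
  | n + 1 => fun x => max 0 (h x + maxB T h n (T x))

section
variable {α : Type*} (T : α → α) (h : α → ℝ)

theorem maxB_nonneg (n : ℕ) (x : α) : 0 ≤ maxB T h n x := by
  cases n with
  | zero => exact le_rfl
  | succ n => exact le_max_left _ _

theorem maxB_succ (n : ℕ) (x : α) : maxB T h (n + 1) x = max 0 (h x + maxB T h n (T x)) := rfl

theorem maxB_mono_succ (n : ℕ) (x : α) : maxB T h n x ≤ maxB T h (n + 1) x := by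
  induction n generalizing x with
  | zero => exact maxB_nonneg T h 1 x
  | succ n ih =>
    rw [maxB_succ, maxB_succ]
    gcongr
    exact ih _

theorem maxB_ge (n : ℕ) (x : α) : birkhoffSum T h n x ≤ maxB T h n x := by
  induction n generalizing x with
  | zero => simp [maxB]
  | succ n ih =>
    rw [maxB_succ, birkhoffSum_succ']
    exact le_max_of_le_right (by gcongr; exact ih _)

theorem maxB_le (C : ℝ) (hC0 : 0 ≤ C) (hC : ∀ x, |h x| ≤ C) (n : ℕ) (x : α) :
    maxB T h n x ≤ n * C := by
  induction n generalizing x with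
  | zero => simp [maxB]
  | succ n ih =>
    rw [maxB_succ]
    push_cast
    apply max_le (by positivity)
    have := ih (T x)
    have := (abs_le.1 (hC x)).2
    linarith

theorem maxB_measurable [MeasurableSpace α] (hT : Measurable T) (hh : Measurable h) (n : ℕ) :
    Measurable (maxB T h n) := by
  induction n with
  | zero => exact measurable_const
  | succ n ih => exact measurable_const.max (hh.add (ih.comp hT))
end

theorem maximal_ergodic {α : Type*} [MeasurableSpace α] (μ : Measure α) [IsFiniteMeasure μ]
    (T : α → α) (hT : MeasurePreserving T μ μ) (h : α → ℝ) (hh : Measurable h) (C : ℝ)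
    (hC : ∀ x, |h x| ≤ C) (hpos : ∀ x, h x ≠ 0 → ∃ n, 0 < birkhoffSum T h n x) :
    0 ≤ ∫ x, h x ∂μ := by
  by_cases hα : Nonempty α
  swap
  · have := not_nonempty_iff.1 hα
    simp [Measure.eq_zero_of_isEmpty μ]
  have hC0 : 0 ≤ C := (abs_nonneg _).trans (hC hα.some)
  have hm := maxB_measurable T h hT.measurable hh
  have hint : ∀ n, Integrable (maxB T h n) μ := fun n =>
    Integrable.of_bound (hm n).aestronglyMeasurable (n * C) (ae_of_all _ fun x => by
      rw [Real.norm_of_nonneg (maxB_nonneg T h n x)]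
      exact maxB_le T h C hC0 hC n x)
  let k : ℕ → α → ℝ := fun n => {x | 0 < maxB T h n x}.indicator h
  have hkm : ∀ n, Measurable (k n) := fun n =>
    hh.indicator (measurableSet_lt measurable_const (hm n))
  have hkC : ∀ n x, ‖k n x‖ ≤ C := by
    intro n x
    refine (norm_indicator_le_norm_self _ _).trans (hC x)
  have hk : ∀ n, 0 ≤ ∫ x, k n x ∂μ := by
    intro n
    have h1 : ∫ x, maxB T h n (T x) ∂μ = ∫ x, maxB T h n x ∂μ := by
      conv_rhs => rw [← hT.map_eq]
      rw [integral_map hT.measurable.aemeasurable (hm n).aestronglyMeasurable]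
    have hint2 : Integrable (fun x => maxB T h n (T x)) μ := hT.integrable_comp_of_integrable (hint n)
    have h2 : ∫ x, (maxB T h n x - maxB T h n (T x)) ∂μ ≤ ∫ x, k n x ∂μ := by
      apply integral_mono ((hint n).sub hint2)
        (Integrable.of_bound (hkm n).aestronglyMeasurable C (ae_of_all _ (hkC n)))
      intro x
      change maxB T h n x - maxB T h n (T x) ≤ k n x
      simp only [k, Set.indicator_apply, mem_setOf_eq]
      split_ifs with hx
      · have h3 := maxB_mono_succ T h n x
        have h4 : 0 < maxB T h (n + 1) x := hx.trans_le h3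
        rw [maxB_succ] at h3 h4
        have : 0 < h x + maxB T h n (T x) := by
          rcases lt_max_iff.1 h4 with h | h
          · exact absurd h (lt_irrefl _)
          · exact h
        rw [max_eq_right this.le] at h3
        linarith
      · have := maxB_nonneg T h n (T x)
        linarith
    rw [integral_sub (hint n) hint2, h1, sub_self] at h2
    exact h2
  have hmono : ∀ x, Monotone fun n => maxB T h n x := fun x =>
    monotone_nat_of_le_succ fun n => maxB_mono_succ T h n x
  refine ge_of_tendsto' (tendsto_integral_of_dominated_convergence (fun _ => C)
    (fun n => (hkm n).aestronglyMeasurable) (integrable_const C)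
    (fun n => ae_of_all _ (hkC n)) (ae_of_all _ fun x => ?_)) hk
  by_cases hx : h x = 0
  · simp [k, Set.indicator_apply, hx]
  · obtain ⟨n, hn⟩ := hpos x hx
    refine tendsto_const_nhds.congr' ?_
    filter_upwards [eventually_ge_atTop n] with m hmn
    have : 0 < maxB T h m x := (hn.trans_le (maxB_ge T h n x)).trans_le (hmono x hmn)
    simp [k, this]

theorem birkhoff_bdd {α : Type*} [MeasurableSpace α] (μ : Measure α) [IsFiniteMeasure μ]
    (T : α → α) (hT : MeasurePreserving T μ μ) (g : α → ℝ) (hg : Measurable g) (C : ℝ)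
    (hC : ∀ x, |g x| ≤ C) :
    ∀ᵐ x ∂μ, ∃ l, Tendsto (fun n : ℕ => birkhoffSum T g n x / n) atTop (𝓝 l) := by
  let A : ℕ → α → ℝ := fun n x => birkhoffSum T g n x / n
  have hSm : ∀ n, Measurable (birkhoffSum T g n) := by
    intro n
    have : birkhoffSum T g n = fun x => ∑ i ∈ Finset.range n, g (T^[i] x) := rfl
    rw [this]
    exact Finset.measurable_fun_sum _ fun i _ => hg.comp (hT.measurable.iterate i)
  have hAm : ∀ n, Measurable (A n) := fun n => (hSm n).div_const _
  have hAT : ∀ x, Tendsto (fun n => A n (T x) - A n x) atTop (𝓝 0) := by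
    intro x
    have h1 : Tendsto (fun n : ℕ => 2 * C / (n : ℝ)) atTop (𝓝 0) :=
      tendsto_const_div_atTop_nhds_zero_nat _
    refine squeeze_zero_norm (fun n => ?_) h1
    have : A n (T x) - A n x = (g (T^[n] x) - g x) / n := by
      simp only [A]
      rw [← sub_div, birkhoffSum_apply_sub_birkhoffSum]
    rw [this, norm_div, Real.norm_natCast]
    gcongr
    have := hC (T^[n] x)
    have := hC x
    rw [Real.norm_eq_abs]
    have := abs_sub (g (T^[n] x)) (g x)
    linarith
  have hAb : ∀ n x, |A n x| ≤ C := by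
    intro n x
    rcases Nat.eq_zero_or_pos n with rfl | hn
    · simp [A]; exact (abs_nonneg _).trans (hC x)
    · have hn' : (0 : ℝ) < n := by exact_mod_cast hn
      simp only [A]
      rw [abs_div, abs_of_pos hn', div_le_iff₀ hn']
      refine (Finset.abs_sum_le_sum_abs _ _).trans ?_
      refine (Finset.sum_le_sum fun i _ => hC (T^[i] x)).trans ?_
      simp [mul_comm]
  let B : ℚ → ℚ → Set α := fun a b => {x | (∃ q : ℚ, q < a ∧ ∃ᶠ n in atTop, A n x < q) ∧
    ∃ q : ℚ, b < q ∧ ∃ᶠ n in atTop, (q : ℝ) < A n x}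
  have hBm : ∀ a b, MeasurableSet (B a b) := by
    intro a b
    have m1 : ∀ q : ℚ, MeasurableSet {x | ∃ᶠ n in atTop, A n x < q} := by
      intro q
      simp only [frequently_atTop, setOf_forall, setOf_exists, setOf_and]
      refine MeasurableSet.iInter fun N => MeasurableSet.iUnion fun n => ?_
      exact (MeasurableSet.const _).inter (measurableSet_lt (hAm n) measurable_const)
    have m2 : ∀ q : ℚ, MeasurableSet {x | ∃ᶠ n in atTop, (q : ℝ) < A n x} := by
      intro q
      simp only [frequently_atTop, setOf_forall, setOf_exists, setOf_and]
      refine MeasurableSet.iInter fun N => MeasurableSet.iUnion fun n => ?_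
      exact (MeasurableSet.const _).inter (measurableSet_lt measurable_const (hAm n))
    simp only [B, setOf_and, setOf_exists]
    exact (MeasurableSet.iUnion fun q => (MeasurableSet.const _).inter (m1 q)).inter
      (MeasurableSet.iUnion fun q => (MeasurableSet.const _).inter (m2 q))
  have hlow : ∀ (u v : ℕ → ℝ) (a : ℚ), Tendsto (fun n => u n - v n) atTop (𝓝 0) →
      (∃ q : ℚ, q < a ∧ ∃ᶠ n in atTop, v n < q) → ∃ q : ℚ, q < a ∧ ∃ᶠ n in atTop, u n < q := by
    rintro u v a huv ⟨q, hq, hf⟩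
    obtain ⟨q', h1, h2⟩ := exists_between hq
    refine ⟨q', h2, (hf.and_eventually (huv.eventually_lt_const
      (show (0 : ℝ) < q' - q by have : (q : ℝ) < q' := by exact_mod_cast h1
                                linarith))).mono ?_⟩
    rintro n ⟨h3, h4⟩
    linarith
  have hhigh : ∀ (u v : ℕ → ℝ) (b : ℚ), Tendsto (fun n => u n - v n) atTop (𝓝 0) →
      (∃ q : ℚ, b < q ∧ ∃ᶠ n in atTop, (q : ℝ) < v n) →
      ∃ q : ℚ, b < q ∧ ∃ᶠ n in atTop, (q : ℝ) < u n := by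
    rintro u v b huv ⟨q, hq, hf⟩
    obtain ⟨q', h1, h2⟩ := exists_between hq
    refine ⟨q', h1, (hf.and_eventually (huv.eventually_const_lt
      (show (q' : ℝ) - q < 0 by have : (q' : ℝ) < q := by exact_mod_cast h2
                                linarith))).mono ?_⟩
    rintro n ⟨h3, h4⟩
    linarith
  have hAT' : ∀ x, Tendsto (fun n => A n x - A n (T x)) atTop (𝓝 0) := by
    intro x
    simpa using (hAT x).neg
  have hBT : ∀ a b x, T x ∈ B a b ↔ x ∈ B a b := fun a b x =>
    ⟨fun h => ⟨hlow _ _ a (hAT' x) h.1, hhigh _ _ b (hAT' x) h.2⟩,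
      fun h => ⟨hlow _ _ a (hAT x) h.1, hhigh _ _ b (hAT x) h.2⟩⟩
  have hBTn : ∀ a b n x, T^[n] x ∈ B a b ↔ x ∈ B a b := by
    intro a b n x
    induction n with
    | zero => rfl
    | succ n ih => rw [Function.iterate_succ_apply', hBT, ih]
  have hB0 : ∀ a b : ℚ, a < b → μ (B a b) = 0 := by
    intro a b hab
    have hab' : (a : ℝ) < b := by exact_mod_cast hab
    have hsum : ∀ (k : α → ℝ) (n : ℕ) (x : α), x ∈ B a b →
        birkhoffSum T ((B a b).indicator k) n x = birkhoffSum T k n x := by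
      intro k n x hx
      refine Finset.sum_congr rfl fun i _ => ?_
      rw [Set.indicator_of_mem ((hBTn a b i x).2 hx)]
    have hgi : Integrable g μ := Integrable.of_bound hg.aestronglyMeasurable C (ae_of_all _ hC)
    have i1 := maximal_ergodic μ T hT ((B a b).indicator fun x => g x - b)
      ((hg.sub_const _).indicator (hBm a b)) (C + |(b : ℝ)|)
      (fun x => by
        have h1 := norm_indicator_le_norm_self (s := B a b) (fun x => g x - b) x
        rw [Real.norm_eq_abs] at h1
        refine h1.trans ((abs_sub _ _).trans ?_)
        gcongr
        exact hC x)
      (fun x hx => by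
        have hxB : x ∈ B a b := by
          by_contra h
          exact hx (Set.indicator_of_notMem h _)
        obtain ⟨q, hq, hf⟩ := hxB.2
        obtain ⟨n, hn, hn0⟩ := (hf.and_eventually (eventually_gt_atTop 0)).exists
        refine ⟨n, ?_⟩
        rw [hsum _ _ _ hxB]
        have hn' : (0 : ℝ) < n := by exact_mod_cast hn0
        have : birkhoffSum T (fun x => g x - b) n x = birkhoffSum T g n x - n * b := by
          simp [birkhoffSum, Finset.sum_sub_distrib]
        rw [this]
        simp only [A] at hn
        rw [lt_div_iff₀ hn'] at hn
        have : (b : ℝ) < q := by exact_mod_cast hq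
        nlinarith)
    have i2 := maximal_ergodic μ T hT ((B a b).indicator fun x => a - g x)
      ((measurable_const.sub hg).indicator (hBm a b)) (|(a : ℝ)| + C)
      (fun x => by
        have h1 := norm_indicator_le_norm_self (s := B a b) (fun x => a - g x) x
        rw [Real.norm_eq_abs] at h1
        refine h1.trans ((abs_sub _ _).trans ?_)
        gcongr
        exact hC x)
      (fun x hx => by
        have hxB : x ∈ B a b := by
          by_contra h
          exact hx (Set.indicator_of_notMem h _)
        obtain ⟨q, hq, hf⟩ := hxB.1
        obtain ⟨n, hn, hn0⟩ := (hf.and_eventually (eventually_gt_atTop 0)).exists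
        refine ⟨n, ?_⟩
        rw [hsum _ _ _ hxB]
        have hn' : (0 : ℝ) < n := by exact_mod_cast hn0
        have : birkhoffSum T (fun x => a - g x) n x = n * a - birkhoffSum T g n x := by
          simp [birkhoffSum, Finset.sum_sub_distrib]
        rw [this]
        simp only [A] at hn
        rw [div_lt_iff₀ hn'] at hn
        have : (q : ℝ) < a := by exact_mod_cast hq
        nlinarith)
    rw [integral_indicator (hBm a b)] at i1 i2
    rw [integral_sub hgi.integrableOn (integrable_const _)] at i1
    rw [integral_sub (integrable_const _) hgi.integrableOn] at i2
    simp only [integral_const, smul_eq_mul, measureReal_restrict_apply_univ] at i1 i2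
    have : μ.real (B a b) = 0 := by
      have := measureReal_nonneg (μ := μ) (s := B a b)
      nlinarith
    exact (measureReal_eq_zero_iff).1 this
  have hae : ∀ᵐ x ∂μ, ∀ a b : ℚ, a < b → x ∉ B a b := by
    rw [ae_all_iff]; intro a
    rw [ae_all_iff]; intro b
    by_cases hab : a < b
    · filter_upwards [measure_eq_zero_iff_ae_notMem.1 (hB0 a b hab)] with x hx _ using hx
    · exact ae_of_all _ fun x h => absurd h hab
  filter_upwards [hae] with x hx
  refine tendsto_of_no_upcrossings (s := Set.range ((↑) : ℚ → ℝ)) Rat.denseRange_cast ?_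
    (isBoundedUnder_of ⟨C, fun n => (abs_le.1 (hAb n x)).2⟩)
    (isBoundedUnder_of ⟨-C, fun n => (abs_le.1 (hAb n x)).1⟩)
  rintro _ ⟨a, rfl⟩ _ ⟨b, rfl⟩ hab ⟨h1, h2⟩
  have hab : a < b := by exact_mod_cast hab
  exact hx ((2 * a + b) / 3) ((a + 2 * b) / 3) (by linarith) ⟨⟨a, by linarith, h1⟩,
    ⟨b, by linarith, h2⟩⟩

theorem hitP {X : Type*} (A : ℕ → Set X) (x : X) : ∃ j, x ∈ A j ∨ ∀ i, x ∉ A i := by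
  by_cases h : ∃ j, x ∈ A j
  · obtain ⟨j, hj⟩ := h; exact ⟨j, Or.inl hj⟩
  · push Not at h; exact ⟨0, Or.inr h⟩

/-- First index `j` with `x ∈ A j` (0 if none). -/
def hit {X : Type*} (A : ℕ → Set X) (x : X) : ℕ := Nat.find (hitP A x)

theorem hit_measurable {X : Type*} [MeasurableSpace X] (A : ℕ → Set X)
    (hA : ∀ j, MeasurableSet (A j)) : Measurable (hit A) := by
  unfold hit
  refine measurable_find (p := fun x j => x ∈ A j ∨ ∀ i, x ∉ A i) (hitP A) ?_
  intro k
  have : {x | x ∈ A k ∨ ∀ i, x ∉ A i} = A k ∪ ⋂ i, (A i)ᶜ := by ext x; simp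
  rw [this]
  exact (hA k).union (MeasurableSet.iInter fun i => (hA i).compl)

theorem hit_mem {X : Type*} (A : ℕ → Set X) (x : X) (h : ∃ j, x ∈ A j) : x ∈ A (hit A x) := by
  obtain ⟨j, hj⟩ := h
  rcases Nat.find_spec (hitP A x) with h | h
  · exact h
  · exact absurd hj (h j)

theorem hit_eq {X : Type*} (A : ℕ → Set X) (x : X) (n : ℕ) (h : x ∈ A n)
    (h2 : ∀ j < n, x ∉ A j) : hit A x = n := by
  have h1 := hit_mem A x ⟨n, h⟩
  apply le_antisymm
  · exact Nat.find_min' _ (Or.inl h)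
  · by_contra hc
    exact h2 _ (not_le.1 hc) h1

theorem symm_iter {X : Type*} [MeasurableSpace X] (T : X ≃ᵐ X) (j : ℕ) (x : X) :
    (⇑T.symm)^[j] ((⇑T)^[j] x) = x :=
  Function.LeftInverse.iterate T.symm_apply_apply j x

theorem iter_symm {X : Type*} [MeasurableSpace X] (T : X ≃ᵐ X) (j : ℕ) (x : X) :
    (⇑T)^[j] ((⇑T.symm)^[j] x) = x :=
  Function.LeftInverse.iterate T.apply_symm_apply j x

theorem symm_iter_le {X : Type*} [MeasurableSpace X] (T : X ≃ᵐ X) (j r : ℕ) (hjr : j ≤ r) (x : X) :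
    (⇑T.symm)^[j] ((⇑T)^[r] x) = (⇑T)^[r - j] x := by
  obtain ⟨k, rfl⟩ := Nat.exists_eq_add_of_le hjr
  rw [Function.iterate_add_apply, symm_iter]; simp

theorem birkhoffSum_meas {X : Type*} [MeasurableSpace X] (T : X → X) (hT : Measurable T)
    (h : X → ℝ) (hh : Measurable h) (n : ℕ) : Measurable (birkhoffSum T h n) := by
  unfold birkhoffSum
  exact Finset.measurable_sum _ fun i _ => hh.comp (hT.iterate i)

theorem induced_limit {X : Type*} [MeasurableSpace X] (μ : Measure X) [IsFiniteMeasure μ]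
    (T : X ≃ᵐ X) (hT : MeasurePreserving T μ μ) (h : X → ℝ) (hh : Measurable h) (U : Set X)
    (hU : MeasurableSet U) (C : ℝ) (hC0 : 0 ≤ C)
    (hC : ∀ x ∈ U, ∀ n : ℕ, 1 ≤ n → (⇑T)^[n] x ∈ U → |birkhoffSum T h n x| ≤ C * n) :
    ∀ᵐ x ∂μ, x ∈ U → ∃ l : ℝ, ∀ n : ℕ → ℕ, Tendsto n atTop atTop →
      (∀ᶠ k in atTop, (⇑T)^[n k] x ∈ U) →
      Tendsto (fun k => birkhoffSum T h (n k) x / (n k : ℝ)) atTop (𝓝 l) := by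
  set A : ℕ → Set X := fun j => (⇑T.symm)^[j] ⁻¹' U with hAdef
  set B : ℕ → Set X := fun j => {x | 1 ≤ j ∧ (⇑T)^[j] x ∈ U} with hBdef
  have hA : ∀ j, MeasurableSet (A j) := fun j => (T.symm.measurable.iterate j) hU
  have hB : ∀ j, MeasurableSet (B j) := fun j => by
    by_cases hj : 1 ≤ j
    · have : B j = (⇑T)^[j] ⁻¹' U := by ext x; simp [hBdef, hj]
      rw [this]
      exact (T.measurable.iterate j) hU
    · have : B j = ∅ := by ext x; simp [hBdef]; omega
      rw [this]; exact MeasurableSet.empty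
  set S : Set X := (⋃ j, A j) ∩ ⋃ j, B j with hSdef
  have hS : MeasurableSet S := (MeasurableSet.iUnion hA).inter (MeasurableSet.iUnion hB)
  set G : ℕ × ℕ → X → ℝ := fun pq w =>
    birkhoffSum T h (pq.1 + pq.2) ((⇑T.symm)^[pq.1] w) / ((pq.1 + pq.2 : ℕ) : ℝ) with hG
  set g : X → ℝ := S.indicator (fun w => G (hit A w, hit B w) w) with hg
  have hgm : Measurable g := by
    refine Measurable.indicator ?_ hS
    have hGm : ∀ pq, Measurable (G pq) := by
      intro pq
      have h0 : Measurable fun w => birkhoffSum T h (pq.1 + pq.2) ((⇑T.symm)^[pq.1] w) :=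
        (birkhoffSum_meas T T.measurable h hh _).comp (T.symm.measurable.iterate _)
      exact h0.div_const _
    have h1 : Measurable (fun p : (ℕ × ℕ) × X => G p.1 p.2) :=
      measurable_from_prod_countable_right hGm
    have h2 : Measurable (fun w => ((hit A w, hit B w), w)) :=
      ((hit_measurable A hA).prodMk (hit_measurable B hB)).prodMk measurable_id
    clear_value G
    exact h1.comp h2
  have hgC : ∀ x, |g x| ≤ C := by
    intro w
    by_cases hw : w ∈ S
    · simp only [hg, Set.indicator_of_mem hw]
      obtain ⟨h1, h2⟩ := hw
      have h1 := hit_mem A w (by simpa using h1)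
      have h2 := hit_mem B w (mem_iUnion.1 h2)
      set p := hit A w
      set q := hit B w
      simp only [hG]
      have h3 := hC _ h1 (p + q) (by have := h2.1; omega) (by
        rw [add_comm, Function.iterate_add_apply, iter_symm]; exact h2.2)
      have hpos : (0:ℝ) < ((p + q : ℕ) : ℝ) := by
        have := h2.1
        exact_mod_cast (by omega : 0 < p + q)
      rw [abs_div, abs_of_pos hpos, div_le_iff₀ hpos]
      exact h3
    · simp only [hg, Set.indicator_of_notMem hw, abs_zero]; exact hC0
  have htel : ∀ n : ℕ, ∀ x ∈ U, (⇑T)^[n] x ∈ U → birkhoffSum T g n x = birkhoffSum T h n x := by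
    intro n
    induction n using Nat.strong_induction_on with
    | _ n ih =>
      intro x hx hn
      rcases Nat.eq_zero_or_pos n with rfl | hnp
      · simp
      have hex : ∃ j, 1 ≤ j ∧ (⇑T)^[j] x ∈ U := ⟨n, hnp, hn⟩
      set τ := Nat.find hex with hτ
      have hτ1 : 1 ≤ τ := (Nat.find_spec hex).1
      have hτU : (⇑T)^[τ] x ∈ U := (Nat.find_spec hex).2
      have hτm : ∀ j, 1 ≤ j → j < τ → (⇑T)^[j] x ∉ U := fun j hj hjt hh =>
        Nat.find_min hex hjt ⟨hj, hh⟩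
      have hτn : τ ≤ n := Nat.find_min' hex ⟨hnp, hn⟩
      have hblock : ∀ r < τ, g ((⇑T)^[r] x) = birkhoffSum T h τ x / (τ : ℝ) := by
        intro r hr
        have hp1 : (⇑T)^[r] x ∈ A r := by
          change (⇑T.symm)^[r] ((⇑T)^[r] x) ∈ U
          rw [symm_iter]; exact hx
        have hp : hit A ((⇑T)^[r] x) = r := by
          apply hit_eq _ _ _ hp1
          intro j hj hc
          change (⇑T.symm)^[j] ((⇑T)^[r] x) ∈ U at hc
          rw [symm_iter_le _ _ _ hj.le] at hc
          exact hτm (r - j) (by omega) (by omega) hc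
        have hq1 : (⇑T)^[r] x ∈ B (τ - r) := by
          refine ⟨by omega, ?_⟩
          rw [← Function.iterate_add_apply, Nat.sub_add_cancel hr.le]; exact hτU
        have hq : hit B ((⇑T)^[r] x) = τ - r := by
          apply hit_eq _ _ _ hq1
          rintro j hj ⟨hc1, hc⟩
          rw [← Function.iterate_add_apply] at hc
          exact hτm (j + r) (by omega) (by omega) hc
        have hmem : (⇑T)^[r] x ∈ S := ⟨mem_iUnion.2 ⟨_, hp1⟩, mem_iUnion.2 ⟨_, hq1⟩⟩
        simp only [hg, Set.indicator_of_mem hmem, hp, hq, hG]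
        rw [symm_iter, Nat.add_sub_cancel' hr.le]
      have h1 : birkhoffSum T g τ x = birkhoffSum T h τ x := by
        rw [birkhoffSum, Finset.sum_congr rfl fun r hr => hblock r (Finset.mem_range.1 hr)]
        have : (τ : ℝ) ≠ 0 := by exact_mod_cast (by omega : τ ≠ 0)
        simp only [Finset.sum_const, Finset.card_range, nsmul_eq_mul]
        field_simp
      obtain ⟨m, hm⟩ := Nat.exists_eq_add_of_le hτn
      have h2 := ih m (by omega) _ hτU (by
        rw [← Function.iterate_add_apply, add_comm, ← hm]; exact hn)
      rw [hm, birkhoffSum_add, birkhoffSum_add, h1, h2]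
  filter_upwards [birkhoff_bdd μ T hT g hgm C hgC] with x ⟨l, hl⟩ hx
  refine ⟨l, fun n hn hev => ?_⟩
  refine (hl.comp hn).congr' ?_
  filter_upwards [hev] with k hk
  simp only [Function.comp]
  rw [htel _ x hx hk]

theorem QH_translate (c : ℂ) : QH (Homeomorph.addRight c) :=
  ⟨fun _ => 0, continuousOn_const, by simp, by
    intro x y h
    have : x - y ≠ 0 := sub_ne_zero.2 h
    simp [this]⟩

/-- The period. -/
def PP : ℂ := 2 * Real.pi * Complex.I

theorem PP_norm : ‖PP‖ = 2 * Real.pi := by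
  simp [PP, abs_of_pos Real.pi_pos]

/-- Same translated disc, or equal. -/
def rel (w0 : ℂ) (r : ℝ) (u v : ℂ) : Prop :=
  u = v ∨ ∃ a : ℤ, u ∈ ball (w0 + a * PP) r ∧ v ∈ ball (w0 + a * PP) r

theorem ball_unique (w0 : ℂ) (r : ℝ) (hr : r ≤ Real.pi) (v : ℂ) (a b : ℤ)
    (ha : v ∈ ball (w0 + a * PP) r) (hb : v ∈ ball (w0 + b * PP) r) : a = b := by
  by_contra hab
  have h1 : dist (w0 + a * PP) (w0 + b * PP) < 2 * Real.pi := by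
    have := dist_triangle_left (w0 + a * PP) (w0 + b * PP) v
    rw [mem_ball] at ha hb
    linarith
  have h2 : dist (w0 + a * PP) (w0 + b * PP) = |((a - b : ℤ) : ℝ)| * (2 * Real.pi) := by
    rw [dist_eq_norm, ← PP_norm]
    have : w0 + a * PP - (w0 + b * PP) = ((a - b : ℤ) : ℂ) * PP := by push_cast; ring
    rw [this, norm_mul, Complex.norm_intCast]
  have h3 : (1:ℝ) ≤ |((a - b : ℤ) : ℝ)| := by
    rw [← Int.cast_abs]
    exact_mod_cast Int.one_le_abs (sub_ne_zero.2 hab)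
  have := Real.pi_pos
  nlinarith

theorem rel_equiv (w0 : ℂ) (r : ℝ) (hr : r ≤ Real.pi) : Equivalence (rel w0 r) where
  refl x := Or.inl rfl
  symm := by
    rintro x y (h | ⟨a, h1, h2⟩)
    · exact Or.inl h.symm
    · exact Or.inr ⟨a, h2, h1⟩
  trans := by
    rintro x y z (rfl | ⟨a, h1, h2⟩) h
    · exact h
    · rcases h with rfl | ⟨b, h3, h4⟩
      · exact Or.inr ⟨a, h1, h2⟩
      · obtain rfl := ball_unique w0 r hr y a b h2 h3
        exact Or.inr ⟨a, h1, h4⟩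

theorem rel_push (w0 : ℂ) (r : ℝ) (u v : ℂ) (h : rel w0 r u v) :
    ∃ φ : ℂ ≃ₜ ℂ, QH φ ∧ φ u = v ∧ (∀ x, rel w0 r (φ x) x) ∧
      ∀ x, ¬ rel w0 r x u → φ x = x := by
  rcases h with rfl | ⟨a, hu, hv⟩
  · exact ⟨Homeomorph.refl ℂ, QH.refl, rfl, fun x => Or.inl rfl, fun x _ => rfl⟩
  · obtain ⟨φ, h1, h2, h3⟩ := push_open (ball (w0 + a * PP) r) isOpen_ball
      (convex_ball _ _).isPreconnected u v hu hv
    refine ⟨φ, h1, h2, fun x => ?_, fun x hx => ?_⟩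
    · by_cases hx : x ∈ ball (w0 + a * PP) r
      · refine Or.inr ⟨a, ?_, hx⟩
        by_contra hc
        have := φ.injective (h3 _ hc)
        rw [this] at hc
        exact hc hx
      · exact Or.inl (h3 x hx)
    · exact h3 x fun hxm => hx (Or.inr ⟨a, hxm, hu⟩)

theorem rel_translate (w0 : ℂ) (r : ℝ) (u v : ℂ) (h : rel w0 r u v) (c : ℤ) :
    rel w0 r (u + c * PP) (v + c * PP) := by
  rcases h with rfl | ⟨a, hu, hv⟩
  · exact Or.inl rfl
  · refine Or.inr ⟨a + c, ?_, ?_⟩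
    · rw [mem_ball, dist_eq_norm] at hu ⊢
      convert hu using 2; push_cast; ring
    · rw [mem_ball, dist_eq_norm] at hv ⊢
      convert hv using 2; push_cast; ring

theorem equiv_int (G : ℂ → ℂ) (hG : ∀ w, G (w + PP) = G w + PP) (c : ℤ) (w : ℂ) :
    G (w + c * PP) = G w + c * PP := by
  induction c using Int.induction_on generalizing w with
  | zero => simp
  | succ i ih =>
    have : w + ((i + 1 : ℤ) : ℂ) * PP = (w + (i : ℤ) * PP) + PP := by push_cast; ring
    rw [this, hG, ih]; push_cast; ring
  | pred i ih =>
    have h1 := hG (w + ((-i - 1 : ℤ) : ℂ) * PP)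
    have : w + ((-i - 1 : ℤ) : ℂ) * PP + PP = (w + ((-i : ℤ) : ℂ) * PP) := by push_cast; ring
    rw [this, ih] at h1
    rw [eq_comm, ← sub_eq_iff_eq_add] at h1
    rw [← h1]; push_cast; ring

/-- Chains of translated discs. -/
def Chn (G : ℂ → ℂ) (r : ℂ → ℂ → Prop) (x y : ℂ) : Prop :=
  ∃ (m : ℕ) (u : ℕ → ℂ), 1 ≤ m ∧ r x (u 0) ∧ r (u m) y ∧ ∀ i < m, r (G (u i)) (u (i + 1))

theorem Chn.trans {G : ℂ → ℂ} {r : ℂ → ℂ → Prop} (hr : Equivalence r) {x y z : ℂ}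
    (h1 : Chn G r x y) (h2 : Chn G r y z) : Chn G r x z := by
  obtain ⟨m, u, hm, h0, h1, hu⟩ := h1
  obtain ⟨m', u', hm', h0', h1', hu'⟩ := h2
  refine ⟨m + m', fun i => if i < m then u i else u' (i - m), by omega, ?_, ?_, ?_⟩
  · simp [show 0 < m by omega, h0]
  · simp [h1']
  · intro i hi
    by_cases him : i < m
    · by_cases him' : i + 1 < m
      · simp only [him, him', if_true]; exact hu i him
      · have : i + 1 = m := by omega
        simp only [him, if_true, this, Nat.sub_self, lt_irrefl, if_false]
        have h3 := hu i him
        rw [this] at h3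
        exact hr.trans h3 (hr.trans h1 h0')
    · simp only [him, if_false, show ¬ i + 1 < m by omega]
      have := hu' (i - m) (by omega)
      rwa [show i - m + 1 = i + 1 - m by omega] at this

theorem franks_sign (G : ℂ ≃ₜ ℂ) (hQ : QH G) (hper : ∀ w, G (w + PP) = G w + PP)
    (hnofix : ∀ w, G w ≠ w) (w0 : ℂ) (r : ℝ) (hr0 : 0 < r) (hr : r ≤ Real.pi)
    (hfree : ∀ w ∈ ball w0 r, G w ∉ ball w0 r)
    (w1 v1 w2 v2 : ℂ) (n1 n2 : ℕ) (a b : ℤ) (hw1 : w1 ∈ ball w0 r) (hv1 : v1 ∈ ball w0 r)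
    (hw2 : w2 ∈ ball w0 r) (hv2 : v2 ∈ ball w0 r) (hn1 : 1 ≤ n1) (hn2 : 1 ≤ n2)
    (ha : 0 ≤ a) (hb : b ≤ 0)
    (h1 : (⇑G)^[n1] w1 = v1 + a * PP) (h2 : (⇑G)^[n2] w2 = v2 + b * PP) : False := by
  have hE := rel_equiv w0 r hr
  set R := rel w0 r with hR
  have hw00 : w0 ∈ ball w0 r := mem_ball_self hr0
  have hrel : ∀ x ∈ ball w0 r, ∀ y ∈ ball w0 r, R x y := fun x hx y hy =>
    Or.inr ⟨0, by simpa using hx, by simpa using hy⟩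
  have hFr : ∀ x, ¬ R (G x) x := by
    rintro x (h | ⟨c, h3, h4⟩)
    · exact hnofix x h
    · have h5 := equiv_int G hper (-c) x
      apply hfree (x + ((-c : ℤ) : ℂ) * PP)
      · rw [mem_ball, dist_eq_norm] at h4 ⊢
        convert h4 using 2; push_cast; ring
      · rw [h5]
        rw [mem_ball, dist_eq_norm] at h3 ⊢
        convert h3 using 2; push_cast; ring
  have hno : ∀ x, ¬ Chn G R x x := by
    rintro x ⟨m, u, hm, h0, h3, hu⟩
    exact franks hQ R hE (fun u v h => rel_push w0 r u v h) hFr m hm u hu (hE.trans h3 h0)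
  have htr : ∀ x y (c : ℤ), Chn G R x y → Chn G R (x + c * PP) (y + c * PP) := by
    rintro x y c ⟨m, u, hm, h0, h3, hu⟩
    refine ⟨m, fun i => u i + c * PP, hm, rel_translate _ _ _ _ h0 c, rel_translate _ _ _ _ h3 c, ?_⟩
    intro i hi
    simp only [equiv_int G hper]
    exact rel_translate _ _ _ _ (hu i hi) c
  set S : ℤ → Prop := fun c => Chn G R w0 (w0 + c * PP) with hS
  have hS0 : ¬ S 0 := by
    intro h; apply hno w0; simpa [hS] using h
  have hSadd : ∀ c d, S c → S d → S (c + d) := by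
    intro c d hc hd
    have := htr _ _ c hd
    have h4 := Chn.trans hE hc this
    simp only [hS]
    convert h4 using 1; push_cast; ring
  have hbase : ∀ w ∈ ball w0 r, ∀ v ∈ ball w0 r, ∀ n : ℕ, 1 ≤ n → ∀ c : ℤ,
      (⇑G)^[n] w = v + c * PP → S c := by
    intro w hw v hv n hn c h
    refine ⟨n, fun i => (⇑G)^[i] w, hn, hrel _ hw00 _ hw, ?_, ?_⟩
    · simp only [h]
      exact rel_translate _ _ _ _ (hrel _ hv _ hw00) c
    · intro i _
      simp only [Function.iterate_succ_apply']
      exact hE.refl _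
  have hSmul : ∀ c, S c → ∀ n : ℕ, S (((n + 1 : ℕ) : ℤ) * c) := by
    intro c hc n
    induction n with
    | zero => simpa using hc
    | succ n ih =>
      have := hSadd _ _ ih hc
      convert this using 1; push_cast; ring
  have hSa := hbase w1 hw1 v1 hv1 n1 hn1 a h1
  have hSb := hbase w2 hw2 v2 hv2 n2 hn2 b h2
  rcases ha.eq_or_lt with rfl | ha
  · exact hS0 hSa
  rcases hb.eq_or_lt with rfl | hb
  · exact hS0 hSb
  obtain ⟨n, hn⟩ : ∃ n : ℕ, ((n + 1 : ℕ) : ℤ) = a := ⟨(a - 1).toNat, by omega⟩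
  obtain ⟨m, hm⟩ : ∃ m : ℕ, ((m + 1 : ℕ) : ℤ) = -b := ⟨(-b - 1).toNat, by omega⟩
  have h3 := hSadd _ _ (hSmul a hSa m) (hSmul b hSb n)
  rw [hn, hm] at h3
  apply hS0
  convert h3 using 1; ring

theorem shift_iter (F : ℂ → ℂ) (hper : ∀ w, F (w + PP) = F w + PP) (k : ℤ) (n : ℕ) (w : ℂ) :
    (fun w => F w + k * PP)^[n] w = F^[n] w + ((k * n : ℤ) : ℂ) * PP := by
  induction n with
  | zero => simp
  | succ n ih =>
    rw [Function.iterate_succ_apply', Function.iterate_succ_apply', ih, equiv_int F hper]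
    push_cast; ring

theorem return_bound (F : ℂ ≃ₜ ℂ) (hQ : QH F) (hper : ∀ w, F (w + PP) = F w + PP) (M : ℝ)
    (hnofix : ∀ k : ℤ, M < |(k : ℝ)| → ∀ w, F w ≠ w + k * PP)
    (w0 : ℂ) (r : ℝ) (hr0 : 0 < r) (hr : r ≤ Real.pi)
    (hfree : ∀ w ∈ ball w0 r, ∀ v ∈ ball w0 r, ∀ k : ℤ, F w ≠ v + k * PP) :
    ∃ C : ℝ, 0 ≤ C ∧ ∀ w ∈ ball w0 r, ∀ v ∈ ball w0 r, ∀ n : ℕ, 1 ≤ n → ∀ α : ℤ,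
      (⇑F)^[n] w = v + α * PP → |(α : ℝ)| ≤ C * n := by
  by_cases hex : ∃ w ∈ ball w0 r, ∃ v ∈ ball w0 r, ∃ n : ℕ, 1 ≤ n ∧ ∃ α : ℤ,
      (⇑F)^[n] w = v + α * PP
  swap
  · refine ⟨0, le_rfl, fun w hw v hv n hn α h => ?_⟩
    exact absurd ⟨w, hw, v, hv, n, hn, α, h⟩ hex
  obtain ⟨w1, hw1, v1, hv1, n1, hn1, α1, h1⟩ := hex
  obtain ⟨K, hK⟩ := exists_nat_gt (max M |(α1 : ℝ)|)
  have hKM : M < K := (le_max_left _ _).trans_lt hK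
  have hKα : |α1| < (K : ℤ) := by
    have := (le_max_right _ _).trans_lt hK
    exact_mod_cast this
  have hKn : (K : ℤ) ≤ K * n1 := by
    have : (1 : ℤ) ≤ n1 := by exact_mod_cast hn1
    nlinarith [Int.natCast_nonneg K]
  have key : ∀ k : ℤ, M < |(k : ℝ)| → ∀ w v w' v' : ℂ, w ∈ ball w0 r → v ∈ ball w0 r →
      w' ∈ ball w0 r → v' ∈ ball w0 r → ∀ n n' : ℕ, 1 ≤ n → 1 ≤ n' → ∀ α α' : ℤ,
      (⇑F)^[n] w = v + α * PP → (⇑F)^[n'] w' = v' + α' * PP →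
      0 ≤ α + k * n → α' + k * n' ≤ 0 → False := by
    intro k hk w v w' v' hw hv hw' hv' n n' hn hn' α α' h h' ha hb
    have hGc : ⇑(F.trans (Homeomorph.addRight ((k : ℂ) * PP))) = fun w => F w + k * PP := by
      ext w; simp
    refine franks_sign (F.trans (Homeomorph.addRight ((k : ℂ) * PP)))
      (hQ.trans (QH_translate _)) ?_ ?_ w0 r hr0 hr ?_ w v w' v' n n' (α + k * n) (α' + k * n')
      hw hv hw' hv' hn hn' ha hb ?_ ?_
    · intro w; rw [hGc]; simp only [hper]; ring
    · intro w hw; rw [hGc] at hw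
      refine hnofix (-k) (by simpa using hk) w ?_
      push_cast; linear_combination hw
    · intro w hw hw2; rw [hGc] at hw2
      refine hfree w hw _ hw2 (-k) ?_
      push_cast; ring
    · rw [hGc, shift_iter F hper, h]; push_cast; ring
    · rw [hGc, shift_iter F hper, h']; push_cast; ring
  refine ⟨K, Nat.cast_nonneg K, fun w hw v hv n hn α h => ?_⟩
  rw [abs_lt] at hKα
  have e1 : α + (-(K : ℤ)) * n < 0 := by
    by_contra hc
    refine key (-(K : ℤ)) (by simpa using hKM) w v w1 v1 hw hv hw1 hv1 n n1 hn hn1 α α1 h h1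
      (not_lt.1 hc) ?_
    nlinarith
  have e2 : 0 < α + (K : ℤ) * n := by
    by_contra hc
    refine key (K : ℤ) (by simpa using hKM) w1 v1 w v hw1 hv1 hw hv n1 n hn1 hn α1 α h1 h
      ?_ (not_lt.1 hc)
    nlinarith
  have e3 : |α| ≤ (K : ℤ) * n := abs_le.2 ⟨by linarith, by linarith⟩
  exact_mod_cast e3

theorem local_rot (f : ℂ ≃ₜ ℂ) (I : HIsotopy f) (hP1 : P1 I)
    (μ : Measure ℂ) [IsFiniteMeasure μ] (hinv : Measure.map (⇑f) μ = μ)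
    (z' : ℂ) (hz' : f z' = z') (z0 : ℂ) (hz0 : z0 ≠ z') (hnf : f z0 ≠ z0) :
    ∃ U ∈ 𝓝 z0, ∀ᵐ z ∂μ, z ∈ U → ∃ ρ : ℝ, HasRot I z' z ρ := by
  obtain ⟨F, hQ, hexp, hper, hEn⟩ := lift_exists f I z' hz'
  obtain ⟨M, hM⟩ := hP1
  have hpi := Real.pi_pos
  have hper' : ∀ w, F (w + PP) = F w + PP := hper
  have hPim : ∀ k : ℤ, ((k : ℂ) * PP).im = k * (2 * Real.pi) := by
    intro k; simp [PP]
  have hPexp : ∀ (v : ℂ) (k : ℤ), Complex.exp (v + k * PP) = Complex.exp v := by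
    intro v k
    rw [Complex.exp_add, PP, Complex.exp_int_mul_two_pi_mul_I, mul_one]
  have hnofix : ∀ k : ℤ, M < |(k : ℝ)| → ∀ w, F w ≠ w + k * PP := by
    intro k hk w hw
    have h1 : f (z' + Complex.exp w) = z' + Complex.exp w := by
      have := hexp w
      rw [hw, hPexp] at this
      linear_combination -this
    have h2 : z' + Complex.exp w ≠ z' := by
      simp [Complex.exp_ne_zero]
    have h3 := hM _ h1 _ hz' h2
    rw [hEn w, hw, add_sub_cancel_left, hPim, mul_div_assoc, div_self (by positivity), mul_one] at h3
    linarith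
  set w0 := Complex.log (z0 - z') with hw0
  have hsub : z0 - z' ≠ 0 := sub_ne_zero.2 hz0
  have hew0 : Complex.exp w0 = z0 - z' := Complex.exp_log hsub
  obtain ⟨r, hr0, hr, hrf⟩ : ∃ r : ℝ, 0 < r ∧ r ≤ Real.pi ∧ ∀ w ∈ ball w0 r, ∀ v ∈ ball w0 r,
      f (z' + Complex.exp w) ≠ z' + Complex.exp v := by
    have hc1 : Continuous fun p : ℂ × ℂ => f (z' + Complex.exp p.1) :=
      f.continuous.comp (by fun_prop)
    have hc2 : Continuous fun p : ℂ × ℂ => z' + Complex.exp p.2 := by fun_prop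
    have hopen : IsOpen {p : ℂ × ℂ | f (z' + Complex.exp p.1) ≠ z' + Complex.exp p.2} :=
      isOpen_ne_fun hc1 hc2
    have hmem : (w0, w0) ∈ {p : ℂ × ℂ | f (z' + Complex.exp p.1) ≠ z' + Complex.exp p.2} := by
      change f (z' + Complex.exp w0) ≠ z' + Complex.exp w0
      rw [hew0]; simpa using hnf
    obtain ⟨ε, hε, hb⟩ := Metric.isOpen_iff.1 hopen _ hmem
    refine ⟨min ε Real.pi, lt_min hε hpi, min_le_right _ _, fun w hw v hv => ?_⟩
    have : (w, v) ∈ ball (w0, w0) ε := by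
      rw [← ball_prod_same]
      exact ⟨ball_subset_ball (min_le_left _ _) hw, ball_subset_ball (min_le_left _ _) hv⟩
    exact hb this
  have hfree : ∀ w ∈ ball w0 r, ∀ v ∈ ball w0 r, ∀ k : ℤ, F w ≠ v + k * PP := by
    intro w hw v hv k h
    apply hrf w hw v hv
    have := hexp w
    rw [h, hPexp] at this
    rw [this]; ring
  obtain ⟨C, hC0, hC⟩ := return_bound F hQ hper' M hnofix w0 r hr0 hr hfree
  set lam : ℂ → ℂ := fun z => w0 + Complex.log ((z - z') * Complex.exp (-w0)) with hlam
  have hlamm : Measurable lam := by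
    have : Measurable fun z : ℂ => (z - z') * Complex.exp (-w0) := by fun_prop
    exact (Complex.measurable_log.comp this).const_add w0
  have hlexp : ∀ z, z ≠ z' → Complex.exp (lam z) = z - z' := by
    intro z hz
    have h1 : (z - z') * Complex.exp (-w0) ≠ 0 :=
      mul_ne_zero (sub_ne_zero.2 hz) (Complex.exp_ne_zero _)
    simp only [hlam]
    rw [Complex.exp_add, Complex.exp_log h1, mul_comm, mul_assoc, ← Complex.exp_add]
    simp
  set V : Set ℂ := {z | (z - z') * Complex.exp (-w0) ∈ Complex.slitPlane} with hV
  have hVo : IsOpen V := Complex.isOpen_slitPlane.preimage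
    (by fun_prop : Continuous fun z : ℂ => (z - z') * Complex.exp (-w0))
  have hlc : ContinuousOn lam V := by
    refine continuousOn_const.add (ContinuousOn.clog ?_ fun z hz => hz)
    fun_prop
  set U : Set ℂ := V ∩ lam ⁻¹' ball w0 r with hU
  have hUo : IsOpen U := hlc.isOpen_inter_preimage hVo isOpen_ball
  have hz0U : z0 ∈ U := by
    have h1 : (z0 - z') * Complex.exp (-w0) = 1 := by
      rw [← hew0, ← Complex.exp_add]; simp
    refine ⟨?_, ?_⟩
    · change (z0 - z') * Complex.exp (-w0) ∈ Complex.slitPlane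
      rw [h1]; exact Complex.one_mem_slitPlane
    · change w0 + Complex.log ((z0 - z') * Complex.exp (-w0)) ∈ ball w0 r
      rw [h1]; simpa using hr0
  have hUne : ∀ z ∈ U, z ≠ z' := by
    rintro z ⟨h1, -⟩ rfl
    have := Complex.slitPlane_ne_zero h1
    simp at this
  have hfne : ∀ z, z ≠ z' → f z ≠ z' := by
    intro z hz h
    exact hz (f.injective (h.trans hz'.symm))
  have hfne' : ∀ z, z ≠ z' → ∀ n : ℕ, (⇑f)^[n] z ≠ z' := by
    intro z hz n
    induction n with
    | zero => exact hz
    | succ n ih => rw [Function.iterate_succ_apply']; exact hfne _ ih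
  set h : ℂ → ℝ := fun z => (F (lam z) - lam (f z)).im / (2 * Real.pi) with hh
  have hhm : Measurable h := by
    have h1 : Measurable fun z => F (lam z) := F.continuous.measurable.comp hlamm
    have h2 : Measurable fun z => lam (f z) := hlamm.comp f.continuous.measurable
    exact (Complex.measurable_im.comp (h1.sub h2)).div_const _
  have hstep : ∀ z, z ≠ z' → ∃ m : ℤ, h z = m ∧ F (lam z) = lam (f z) + m * PP := by
    intro z hz
    have h1 : Complex.exp (F (lam z)) = Complex.exp (lam (f z)) := by
      rw [hexp, hlexp z hz, hlexp _ (hfne z hz)]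
      simp
    obtain ⟨m, hm⟩ := Complex.exp_eq_exp_iff_exists_int.1 h1
    refine ⟨m, ?_, hm⟩
    have hm' : F (lam z) = lam (f z) + m * PP := hm
    simp only [hh]
    rw [hm', add_sub_cancel_left, hPim, mul_div_assoc, div_self (by positivity), mul_one]
  have hJ : ∀ n : ℕ, ∀ z, z ≠ z' → ∃ α : ℤ, birkhoffSum f h n z = α ∧
      (⇑F)^[n] (lam z) = lam ((⇑f)^[n] z) + α * PP := by
    intro n z hz
    induction n with
    | zero => exact ⟨0, by simp, by simp⟩
    | succ n ih =>
      obtain ⟨α, h1, h2⟩ := ih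
      obtain ⟨m, h3, h4⟩ := hstep _ (hfne' z hz n)
      refine ⟨α + m, ?_, ?_⟩
      · rw [birkhoffSum_succ, h1, h3]; push_cast; ring
      · rw [Function.iterate_succ_apply', Function.iterate_succ_apply', h2, equiv_int F hper', h4]
        push_cast; ring
  have hJs : ∀ n : ℕ, ∀ z, z ≠ z' → ∑ i ∈ Finset.range n, Enlace I ((⇑f)^[i] z) z' =
      birkhoffSum f h n z - ((lam z).im - (lam ((⇑f)^[n] z)).im) / (2 * Real.pi) := by
    intro n z hz
    induction n with
    | zero => simp
    | succ n ih =>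
      have h1 := hlexp _ (hfne' z hz n)
      have h2 := hEn (lam ((⇑f)^[n] z))
      rw [h1, add_sub_cancel] at h2
      rw [Finset.sum_range_succ, ih, birkhoffSum_succ, h2, Function.iterate_succ_apply']
      simp only [hh, Complex.sub_im]
      ring
  have hmp : MeasurePreserving (f.toMeasurableEquiv) μ μ := ⟨f.continuous.measurable, hinv⟩
  have hind := induced_limit μ f.toMeasurableEquiv hmp h hhm U hUo.measurableSet C hC0 (by
    intro x hx n hn hxn
    obtain ⟨α, h1, h2⟩ := hJ n x (hUne x hx)
    have h3 := hC (lam x) hx.2 (lam ((⇑f)^[n] x)) hxn.2 n hn α h2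
    rw [← h1] at h3
    exact h3)
  refine ⟨U, hUo.mem_nhds hz0U, ?_⟩
  filter_upwards [hind] with z hz hzU
  obtain ⟨l, hl⟩ := hz hzU
  refine ⟨l, fun n hn htend => ?_⟩
  have hev : ∀ᶠ k in atTop, (⇑f)^[n k] z ∈ U := htend.eventually (hUo.mem_nhds hzU)
  have h1 : Tendsto (fun k => birkhoffSum f h (n k) z / (n k : ℝ)) atTop (𝓝 l) :=
    hl n hn.tendsto_atTop hev
  have hnR : Tendsto (fun k => ((n k : ℕ) : ℝ)) atTop atTop :=
    tendsto_natCast_atTop_atTop.comp hn.tendsto_atTop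
  have h2 : Tendsto (fun k => ((lam z).im - (lam ((⇑f)^[n k] z)).im) / (2 * Real.pi) / (n k : ℝ))
      atTop (𝓝 0) := by
    have h3 : Tendsto (fun k => 1 / (n k : ℝ)) atTop (𝓝 0) := by
      simp only [one_div]
      exact tendsto_inv_atTop_zero.comp hnR
    refine squeeze_zero_norm' ?_ h3
    filter_upwards [hev] with k hk
    rw [norm_div, Real.norm_natCast]
    gcongr
    rw [Real.norm_eq_abs, abs_div, abs_of_pos (by positivity : (0:ℝ) < 2 * Real.pi),
      div_le_one (by positivity), ← Complex.sub_im]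
    refine (Complex.abs_im_le_norm _).trans ?_
    rw [← dist_eq_norm]
    have h4 := hzU.2
    have h5 := hk.2
    rw [mem_preimage, mem_ball] at h4 h5
    have := dist_triangle_right (lam z) (lam ((⇑f)^[n k] z)) w0
    linarith
  have h6 := h1.sub h2
  rw [sub_zero] at h6
  refine h6.congr fun k => ?_
  rw [hJs _ z (hUne z hzU)]; ring

theorem fixed_rot (f : ℂ ≃ₜ ℂ) (I : HIsotopy f) (z' z : ℂ) (hz : f z = z) :
    HasRot I z' z (Enlace I z z') := by
  intro n hn _
  have h0 : ∀ i, (⇑f)^[i] z = z := fun i => Function.iterate_fixed hz i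
  refine tendsto_const_nhds.congr' ?_
  filter_upwards [hn.tendsto_atTop.eventually_ge_atTop 1] with k hk
  have : ((n k : ℕ) : ℝ) ≠ 0 := by exact_mod_cast (by omega : n k ≠ 0)
  simp only [h0, Finset.sum_const, Finset.card_range, nsmul_eq_mul]
  field_simp

theorem final_aux
    (f : ℂ ≃ₜ ℂ) (I : HIsotopy f) (hP1 : P1 I)
    (μ : Measure ℂ) [IsFiniteMeasure μ] (hinv : Measure.map (⇑f) μ = μ)
    (z' : ℂ) (hz' : z' ∈ FixPts ⇑f) :
    ∀ᵐ zz ∂μ, zz ∈ RecPlus f \ {z'} → ∃ ρ : ℝ, HasRot I z' zz ρ := by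
  rw [ae_iff]
  apply measure_null_of_locally_null
  intro x hx
  have hx' : ¬ (x ∈ RecPlus f \ {z'} → ∃ ρ : ℝ, HasRot I z' x ρ) := hx
  push Not at hx'
  obtain ⟨⟨-, hxz⟩, hno⟩ := hx'
  have hnf : f x ≠ x := fun h => hno _ (fixed_rot f I z' x h)
  obtain ⟨U, hU, hae⟩ := local_rot f I hP1 μ hinv z' hz' x hxz hnf
  refine ⟨_, inter_mem_nhdsWithin _ hU, ?_⟩
  refine measure_mono_null ?_ (ae_iff.1 hae)
  rintro y ⟨hy, hyU⟩
  intro hc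
  exact hy fun _ => hc hyU

theorem stmt7_rotation_number_ae_defined
    (f : ℂ ≃ₜ ℂ) (I : HIsotopy f) (hP1 : P1 I) (hP2 : P2 I)
    (hnc : ¬ IsCompact (FixPts ⇑f)) (hA : Adapted I)
    (μ : Measure ℂ) [IsFiniteMeasure μ] (hinv : Measure.map (⇑f) μ = μ)
    (z' : ℂ) (hz' : z' ∈ FixPts ⇑f) :
    ∀ᵐ zz ∂μ, zz ∈ RecPlus f \ {z'} → ∃ ρ : ℝ, HasRot I z' zz ρ :=
  final_aux f I hP1 μ hinv z' hz'

end
end
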